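/- arXiv:2412.05942 — 2 statements merged into one kernel-verified Lean document; each statement's English description precedes it below -/
import Mathlib

section
/- Let n, M ≥ 1 be integers and let θ be an n×n matrix with nonnegative real entries such that ∏_{i} θ(i,σ(i)) > 0 for at least one permutation σ ∈ S_n. Then ⟨perm(θ↑P_M)⟩ ≤ perm(θ)^M ≤ 2^{n(M−1)/2} · ⟨perm(θ↑P_M)⟩; equivalently, the degree-M Bethe permanent perm_{B,M}(θ) = ⟨perm(θ↑P_M)⟩^{1/M} satisfies 1 ≤ perm(θ)/perm_{B,M}(θ) ≤ (2^{n/2})^{(M−1)/M}. -/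
open scoped BigOperators

noncomputable section

/-- The permanent of a real square matrix: `perm(A) = Σ_{σ} ∏_i A(i, σ(i))`. -/
def perm' {α : Type*} [Fintype α] [DecidableEq α] (A : Matrix α α ℝ) : ℝ :=
  ∑ σ : Equiv.Perm α, ∏ i, A i (σ i)

/-- The `P_M`-lifting `θ↑P_M`: the `nM×nM` matrix with entries
`(θ↑P_M)((i,m),(j,m')) = θ(i,j)·P^{(i,j)}(m,m')`. -/
def liftMat {n M : ℕ} (θ : Matrix (Fin n) (Fin n) ℝ)
    (P : Fin n → Fin n → Equiv.Perm (Fin M)) :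
    Matrix (Fin n × Fin M) (Fin n × Fin M) ℝ :=
  Matrix.of fun p q => θ p.1 q.1 * (if P p.1 q.1 p.2 = q.2 then 1 else 0)

/-- `⟨perm(θ↑P_M)⟩`: the arithmetic average of `perm(θ↑P_M)` over all `(M!)^{n²}`
collections `P_M` of `n²` permutation matrices of size `M×M`. -/
def avgLiftPerm (n M : ℕ) (θ : Matrix (Fin n) (Fin n) ℝ) : ℝ :=
  (∑ P : Fin n → Fin n → Equiv.Perm (Fin M), perm' (liftMat θ P)) /
    (Fintype.card (Fin n → Fin n → Equiv.Perm (Fin M)) : ℝ)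

/-!
Expand both sides over nonnegative integer matrices `K` with all row and column sums `M`. The
coefficient of `∏ i, ∏ j, θ i j ^ K i j` in `perm' θ ^ M` is the number of sequences of `M`
permutations whose permutation matrices sum to `K` (`typeCount`), and its coefficient in the average
permanent of the liftings is a product of factorials (`betheCount`). The two are compared by
induction on `M`, splitting off the first permutation of the sequence.

For the lower bound the induction step is Schrijver's inequality
`∏ i, ∏ j, (1 - γ i j) ≤ perm (γ i j * (1 - γ i j))` for the doubly stochastic matrix `γ = K / M`,
proved by removing edges one at a time from a weighted sum over matchings, where the events that two
vertices are left unmatched are correlated. For the upper bound, the step is that the entropy of a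
random permutation of `n` elements exceeds the Bethe entropy of its marginals `γ` by at most
`(n / 2) * log 2`: reveal its values one after the other in a random order of the rows.
-/

namespace BethePermanent

open Finset Real
open Equiv (Perm)

/-! ### The cubic tail bound -/

section CubicBound

lemma le_of_hasDerivAt_nonneg {f f' : ℝ → ℝ} {a b : ℝ} (hab : a ≤ b)
    (hf : ∀ x ∈ Set.Icc a b, HasDerivAt f (f' x) x) (hf' : ∀ x ∈ Set.Icc a b, 0 ≤ f' x) :
    f a ≤ f b :=
  monotoneOn_of_hasDerivWithinAt_nonneg (convex_Icc a b)
    (fun x hx => (hf x hx).continuousAt.continuousWithinAt)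
    (fun x hx => (hf x (interior_subset hx)).hasDerivWithinAt)
    (fun x hx => hf' x (interior_subset hx))
    (Set.left_mem_Icc.2 hab) (Set.right_mem_Icc.2 hab) hab

lemma le_of_hasDerivAt_nonpos {f f' : ℝ → ℝ} {a b : ℝ} (hab : a ≤ b)
    (hf : ∀ x ∈ Set.Icc a b, HasDerivAt f (f' x) x) (hf' : ∀ x ∈ Set.Icc a b, f' x ≤ 0) :
    f b ≤ f a :=
  neg_le_neg_iff.1 <| le_of_hasDerivAt_nonneg (f := fun x => -f x) (f' := fun x => -f' x) hab
    (fun x hx => (hf x hx).neg) fun x hx => neg_nonneg.2 (hf' x hx)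

lemma log_one_half : log (1 / 2) = -log 2 := by
  rw [one_div, log_inv]

/-- The right-hand side is the parabola through `(0, 0)` that is tangent to `log (1 - x)` at
`x = 1 / 2`. -/
lemma log_one_sub_le {x : ℝ} (h0 : 0 ≤ x) (h1 : x < 1) :
    log (1 - x) ≤ (2 - 4 * log 2) * x - (4 - 4 * log 2) * x ^ 2 := by
  have hL1 := log_two_gt_d9
  have hL2 := log_two_lt_d9
  have hlog : log (1 - 1 / 2) = -log 2 := by rw [← log_one_half]; norm_num
  set L := log 2
  let f : ℝ → ℝ := fun x => (2 - 4 * L) * x - (4 - 4 * L) * x ^ 2 - log (1 - x)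
  let f' : ℝ → ℝ := fun x => (x - 1 / 2) * (2 * (4 - 4 * L) * x - 2 * (3 - 4 * L)) / (1 - x)
  have hf : ∀ y < 1, HasDerivAt f (f' y) y := by
    intro y hy
    have hy' : 1 - y ≠ 0 := by linarith
    refine (((hasDerivAt_id y).const_mul (2 - 4 * L)).sub
      (((hasDerivAt_id y).pow 2).const_mul (4 - 4 * L))).sub
      (((hasDerivAt_id y).const_sub 1).log hy') |>.congr_deriv ?_
    simp only [f', id]
    field_simp
    ring
  have hf_zero : f 0 = 0 := by simp [f]
  have hf_half : f (1 / 2) = 0 := by simp only [f]; rw [hlog]; ring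
  suffices 0 ≤ f x by simp only [f] at this; linarith
  rcases le_total (1 / 2) x with hx | hx
  · rw [← hf_half]
    refine le_of_hasDerivAt_nonneg hx (fun y hy => hf y (by linarith [hy.2])) fun y ⟨hxy, hyx⟩ => ?_
    exact div_nonneg (mul_nonneg (by linarith) (by nlinarith)) (by linarith)
  rcases le_total (2 * (4 - 4 * L) * x) (2 * (3 - 4 * L)) with h | h
  · rw [← hf_zero]
    refine le_of_hasDerivAt_nonneg h0 (fun y hy => hf y (by linarith [hy.2])) fun y ⟨_, hyx⟩ => ?_
    exact div_nonneg (mul_nonneg_of_nonpos_of_nonpos (by linarith) (by nlinarith)) (by linarith)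
  · rw [← hf_half]
    refine le_of_hasDerivAt_nonpos hx (fun y hy => hf y (by linarith [hy.2])) fun y ⟨hxy, hy⟩ => ?_
    exact div_nonpos_of_nonpos_of_nonneg
      (mul_nonpos_of_nonpos_of_nonneg (by linarith) (by nlinarith)) (by linarith)

lemma le_log_of_le_one {u : ℝ} (h0 : 0 < u) (h1 : u ≤ 1) :
    log 2 / 2 * (1 - u⁻¹) - (1 - u) * ((2 - 2 * log 2) + (6 * log 2 - 4) * u) ≤ log u := by
  have hL1 := log_two_gt_d9
  have hL2 := log_two_lt_d9
  have hlog := log_one_half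
  set L := log 2
  let f : ℝ → ℝ := fun u => log u + L / 2 * (u⁻¹ - 1) + (1 - u) * ((2 - 2 * L) + (6 * L - 4) * u)
  let g : ℝ → ℝ := fun u => -2 * (6 * L - 4) * u ^ 2 + (2 * L - 2) * u + L
  have hf : ∀ y, 0 < y → HasDerivAt f ((y - 1 / 2) * g y / y ^ 2) y := by
    intro y hy
    refine ((hasDerivAt_log hy.ne').add
      (((hasDerivAt_inv hy.ne').sub_const 1).const_mul (L / 2))).add
      (((hasDerivAt_id y).const_sub 1).mul
        (((hasDerivAt_id y).const_mul (6 * L - 4)).const_add (2 - 2 * L))) |>.congr_deriv ?_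
    simp only [g, id]
    field_simp
    ring
  have hg_anti : ∀ y z, 0 < y → y ≤ z → g z ≤ g y := by
    intro y z hy hyz
    have : y ^ 2 ≤ z ^ 2 := by gcongr
    simp only [g]
    nlinarith
  have hg_half : 0 ≤ g (1 / 2) := by simp only [g]; linarith
  have hf_half : f (1 / 2) = 0 := by simp only [f]; rw [hlog]; norm_num; ring
  suffices 0 ≤ f u by simp only [f] at this; linarith
  rcases le_total u (1 / 2) with hu | hu
  · rw [← hf_half]
    refine le_of_hasDerivAt_nonpos hu (fun y hy => hf y (h0.trans_le hy.1)) fun y ⟨huy, hy⟩ => ?_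
    exact div_nonpos_of_nonpos_of_nonneg (mul_nonpos_of_nonpos_of_nonneg (by linarith)
      (hg_half.trans (hg_anti _ _ (h0.trans_le huy) hy))) (by positivity)
  rcases le_total 0 (g u) with h | h
  · rw [← hf_half]
    refine le_of_hasDerivAt_nonneg hu (fun y hy => hf y (by linarith [hy.1])) fun y ⟨hy, hyu⟩ => ?_
    exact div_nonneg (mul_nonneg (by linarith) (h.trans (hg_anti _ _ (by linarith) hyu)))
      (by positivity)
  · rw [show (0 : ℝ) = f 1 by simp [f]]
    refine le_of_hasDerivAt_nonpos h1 (fun y hy => hf y (h0.trans_le hy.1)) fun y ⟨huy, _⟩ => ?_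
    exact div_nonpos_of_nonpos_of_nonneg (mul_nonpos_of_nonneg_of_nonpos (by linarith)
      ((hg_anti _ _ h0 huy).trans h)) (by positivity)

/-- The cubic that vanishes at `0` and `1` and touches
`x ↦ (1 - x) * log (1 - x) + log 2 / 2 * x` at `1 / 2`. For a probability vector `q` its values sum
to an upper bound for the expected logarithmic tail of `q` in random order. -/
def cubicBound (x : ℝ) : ℝ :=
  -(x * (1 - x) * ((4 * log 2 - 2) - (6 * log 2 - 4) * x))

@[simp] lemma cubicBound_zero : cubicBound 0 = 0 := by simp [cubicBound]

@[simp] lemma cubicBound_one : cubicBound 1 = 0 := by simp [cubicBound]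

lemma cubicBound_le {x : ℝ} (h0 : 0 ≤ x) (h1 : x ≤ 1) :
    cubicBound x ≤ (1 - x) * log (1 - x) + log 2 / 2 * x := by
  rcases h1.eq_or_lt with rfl | h1
  · have := log_pos one_lt_two
    simp only [cubicBound_one, sub_self, zero_mul, zero_add, mul_one]
    linarith
  have hx : 0 < 1 - x := by linarith
  have := mul_le_mul_of_nonneg_left (le_log_of_le_one hx (by linarith)) hx.le
  refine le_of_eq_of_le ?_ (add_le_add_left this _)
  rw [cubicBound]
  field_simp
  ring

lemma div_one_sub_add_div_one_sub_le {x y : ℝ} (hx : 0 ≤ x) (hy : 0 ≤ y) (hx1 : x < 1)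
    (hy1 : y < 1) (hxy : x + y ≤ 1) : y / (1 - x) + x / (1 - y) ≤ 2 * (x + y) := by
  have h1 : 0 < 1 - x := by linarith
  have h2 : 0 < 1 - y := by linarith
  rw [div_add_div _ _ h1.ne' h2.ne', div_le_iff₀ (by positivity)]
  nlinarith [mul_nonneg (by linarith : 0 ≤ 1 - x - y) (by nlinarith : 0 ≤ x + y - 2 * x * y)]

lemma four_mul_div_one_sub_sub_le {x y : ℝ} (hx : 0 ≤ x) (hy : 0 ≤ y) (hx1 : x < 1) (hy1 : y < 1)
    (hxy : x + y ≤ 1) :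
    4 * (y / (1 - x) + x / (1 - y)) -
      ((y / (1 - x)) ^ 2 * (2 - x) + (x / (1 - y)) ^ 2 * (2 - y)) ≤ 5 * (x + y) := by
  have h1 : 0 < 1 - x := by linarith
  have h2 : 0 < 1 - y := by linarith
  have h3 : 0 ≤ 1 - x - y := by linarith
  have hR : 0 ≤ (x + y) * (1 + 2 * (x + y)) - x * y * (12 - (x + y)) := by
    nlinarith [mul_nonneg (sq_nonneg (x - y)) (by linarith : 0 ≤ 12 - (x + y)),
      mul_nonneg (add_nonneg hx hy) (sq_nonneg (2 - (x + y)))]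
  have hdiff : 5 * (x + y) - (4 * (y / (1 - x) + x / (1 - y)) -
      ((y / (1 - x)) ^ 2 * (2 - x) + (x / (1 - y)) ^ 2 * (2 - y))) =
      (1 - x - y) * (2 * x * y * (x - y) ^ 2 + (1 - x - y) *
      ((x + y) * (1 + 2 * (x + y)) - x * y * (12 - (x + y)))) / ((1 - x) ^ 2 * (1 - y) ^ 2) := by
    field_simp
    ring
  rw [← sub_nonneg, hdiff]
  positivity

/-- The contribution of the ordered pair `(x, y)` of entries of a probability vector when
`cubicBound` is compared before and after the removal of the entry `x`. -/
def pairGain (x y : ℝ) : ℝ :=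
  (1 - x) * cubicBound (y / (1 - x)) - cubicBound y +
    y / (1 - x) * ((1 - x) * log (1 - x) - cubicBound x)

lemma pairGain_add_pairGain {x y : ℝ} (hx : x ≠ 1) (hy : y ≠ 1) :
    pairGain x y + pairGain y x =
      x * y * ((10 * log 2 - 6) * (y / (1 - x) + x / (1 - y)) -
        (6 * log 2 - 4) * ((y / (1 - x)) ^ 2 * (2 - x) + (x / (1 - y)) ^ 2 * (2 - y)) +
        2 * (4 * log 2 - 2) - (6 * log 2 - 4) * (x + y)) +
      (y * log (1 - x) + x * log (1 - y)) := by
  have h1 : 1 - x ≠ 0 := sub_ne_zero.2 hx.symm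
  have h2 : 1 - y ≠ 0 := sub_ne_zero.2 hy.symm
  unfold pairGain cubicBound
  field_simp
  ring

lemma pairGain_add_pairGain_nonpos {x y : ℝ} (hx : 0 ≤ x) (hy : 0 ≤ y) (hxy : x + y ≤ 1) :
    pairGain x y + pairGain y x ≤ 0 := by
  have hL1 := log_two_gt_d9
  have hL2 := log_two_lt_d9
  rcases (by linarith : x ≤ 1).eq_or_lt with rfl | hx1
  · obtain rfl : y = 0 := by linarith
    simp [pairGain]
  rcases (by linarith : y ≤ 1).eq_or_lt with rfl | hy1
  · obtain rfl : x = 0 := by linarith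
    simp [pairGain]
  have hlogx := mul_le_mul_of_nonneg_left (log_one_sub_le hx hx1) hy
  have hlogy := mul_le_mul_of_nonneg_left (log_one_sub_le hy hy1) hx
  have hlin := mul_le_mul_of_nonneg_left (div_one_sub_add_div_one_sub_le hx hy hx1 hy1 hxy)
    (by linarith : 0 ≤ 10 - 14 * log 2)
  have hquad := mul_le_mul_of_nonneg_left (four_mul_div_one_sub_sub_le hx hy hx1 hy1 hxy)
    (by linarith : 0 ≤ 6 * log 2 - 4)
  have hrat := mul_le_mul_of_nonneg_left (add_le_add hlin hquad) (mul_nonneg hx hy)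
  rw [pairGain_add_pairGain hx1.ne hy1.ne]
  linarith

variable {ι : Type*} [Fintype ι] [DecidableEq ι]

lemma tailBound_erase_eq_sum_pairGain {p : ι → ℝ} (hs : ∑ i, p i = 1) (c : ι) :
    (1 - p c) * (log (1 - p c) + ∑ k ∈ univ.erase c, cubicBound (p k / (1 - p c))) =
      ∑ k ∈ univ.erase c, pairGain (p c) (p k) + ∑ k, cubicBound (p k) := by
  have hrest : ∑ k ∈ univ.erase c, p k = 1 - p c := by
    rw [← hs, ← add_sum_erase _ _ (mem_univ c), add_sub_cancel_left]
  unfold pairGain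
  rw [sum_add_distrib, sum_sub_distrib, ← mul_sum, ← sum_mul, ← sum_div, hrest,
    ← add_sum_erase _ (fun k => cubicBound (p k)) (mem_univ c)]
  by_cases hc : 1 - p c = 0
  · simp [show p c = 1 by linarith]
  · rw [div_self hc]
    ring

lemma sum_pairGain_nonpos {p : ι → ℝ} (hp : ∀ i, 0 ≤ p i) (hs : ∑ i, p i = 1) :
    ∑ c, ∑ k ∈ univ.erase c, pairGain (p c) (p k) ≤ 0 := by
  have hpair : ∀ c k, c ≠ k → p c + p k ≤ 1 := by
    intro c k hck
    rw [← hs, ← sum_pair hck]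
    exact sum_le_sum_of_subset_of_nonneg (subset_univ _) fun i _ _ => hp i
  have hsymm : ∑ c, ∑ k ∈ univ.erase c, pairGain (p c) (p k) =
      ∑ c, ∑ k ∈ univ.erase c, pairGain (p k) (p c) :=
    sum_comm' (by simp [eq_comm])
  have hadd : ∑ c, ∑ k ∈ univ.erase c, (pairGain (p c) (p k) + pairGain (p k) (p c)) ≤ 0 :=
    sum_nonpos fun c _ => sum_nonpos fun k hk =>
      pairGain_add_pairGain_nonpos (hp c) (hp k) (hpair c k (ne_of_mem_erase hk).symm)
  simp only [sum_add_distrib] at hadd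
  linarith

lemma sum_tailBound_erase_le {p : ι → ℝ} (hp : ∀ i, 0 ≤ p i) (hs : ∑ i, p i = 1) :
    ∑ c, (1 - p c) * (log (1 - p c) + ∑ k ∈ univ.erase c, cubicBound (p k / (1 - p c))) ≤
      Fintype.card ι * ∑ k, cubicBound (p k) := by
  simp only [tailBound_erase_eq_sum_pairGain hs, sum_add_distrib, sum_const, card_univ,
    nsmul_eq_mul]
  linarith [sum_pairGain_nonpos hp hs]

end CubicBound

/-! ### The entropy of a random permutation -/

section LogTail

variable {n : ℕ}

lemma sum_perm_succ (F : Perm (Fin (n + 1)) → ℝ) :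
    ∑ τ, F τ = ∑ c, ∑ e : Perm (Fin n), F (Perm.decomposeFin.symm (c, e)) := by
  rw [← Equiv.sum_comp Perm.decomposeFin.symm F, Fintype.sum_prod_type]

lemma Ici_zero_eq_univ : Ici (0 : Fin (n + 1)) = univ := by
  ext; simp

lemma sum_swap_succ (f : Fin (n + 1) → ℝ) (c : Fin (n + 1)) :
    ∑ j : Fin n, f (Equiv.swap 0 c j.succ) = ∑ k ∈ univ.erase c, f k := by
  have := Equiv.sum_comp (Equiv.swap 0 c) f
  rw [Fin.sum_univ_succ, Equiv.swap_apply_left, ← add_sum_erase _ f (mem_univ c)] at this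
  exact add_left_cancel this

/-- `n !` times the expectation of `∑ i, q (τ i) * log (q (τ i) + q (τ (i + 1)) + ⋯)` for a
uniformly random ordering `τ`. -/
def logTailSum (q : Fin n → ℝ) : ℝ :=
  ∑ τ : Perm (Fin n), ∑ i, q (τ i) * log (∑ k ∈ Ici i, q (τ k))

lemma logTailSum_succ (q : Fin (n + 1) → ℝ) :
    logTailSum q = ∑ c, (n.factorial * (q c * log (∑ k, q k)) +
      logTailSum fun j : Fin n => q (Equiv.swap 0 c j.succ)) := by
  unfold logTailSum
  rw [sum_perm_succ]
  refine sum_congr rfl fun c _ => ?_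
  have hsum : ∀ e : Perm (Fin n), ∑ k, q (Perm.decomposeFin.symm (c, e) k) = ∑ k, q k :=
    fun e => Equiv.sum_comp _ q
  simp only [Fin.sum_univ_succ (n := n) (fun _ => _ * log _), Fin.sum_Ici_succ, Ici_zero_eq_univ,
    hsum, Perm.decomposeFin_symm_apply_zero, Perm.decomposeFin_symm_apply_succ, sum_add_distrib,
    sum_const, card_univ, Fintype.card_perm, Fintype.card_fin, nsmul_eq_mul]

lemma mul_one_sub_mul_log_add {S x t : ℝ} (hS : S ≠ 0) :
    S * x * log S + S * (1 - x) * (log (S * (1 - x)) + t) =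
      S * (log S + (1 - x) * (log (1 - x) + t)) := by
  by_cases hx : 1 - x = 0
  · rw [hx, show x = 1 by linarith]
    ring
  · rw [log_mul hS hx]
    ring

lemma logTailSum_le {q : Fin n → ℝ} (hq : ∀ i, 0 ≤ q i) :
    logTailSum q ≤
      n.factorial * ((∑ k, q k) * (log (∑ k, q k) + ∑ j, cubicBound (q j / ∑ k, q k))) := by
  induction n with
  | zero => simp [logTailSum]
  | succ n ih =>
    rcases (sum_nonneg fun i (_ : i ∈ univ) => hq i).eq_or_lt with h0 | hS
    · have hz : ∀ i, q i = 0 := fun i =>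
        (sum_eq_zero_iff_of_nonneg fun i _ => hq i).1 h0.symm i (mem_univ i)
      simp [logTailSum, hz]
    rw [logTailSum_succ]
    set S := ∑ k, q k
    set p : Fin (n + 1) → ℝ := fun i => q i / S
    have hqp : ∀ i, q i = S * p i := fun i => (mul_div_cancel₀ (q i) hS.ne').symm
    have hp : ∀ i, 0 ≤ p i := fun i => div_nonneg (hq i) hS.le
    have hp1 : ∑ i, p i = 1 := by rw [← sum_div, div_self hS.ne']
    have hfirst : ∀ c, n.factorial * (q c * log S) +
        logTailSum (fun j : Fin n => q (Equiv.swap 0 c j.succ)) ≤ n.factorial * (S * (log S +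
          (1 - p c) * (log (1 - p c) + ∑ k ∈ univ.erase c, cubicBound (p k / (1 - p c))))) := by
      intro c
      have hrest : ∑ j : Fin n, q (Equiv.swap 0 c j.succ) = S * (1 - p c) := by
        rw [sum_swap_succ, sum_erase_eq_sub (mem_univ c), mul_one_sub, ← hqp]
      have := ih fun j : Fin n => hq (Equiv.swap 0 c j.succ)
      rw [hrest, sum_swap_succ fun k => cubicBound (q k / (S * (1 - p c)))] at this
      rw [← mul_one_sub_mul_log_add hS.ne', ← hqp, mul_add]
      simpa only [p, div_div, add_le_add_iff_left] using this
    have hsum := mul_le_mul_of_nonneg_left (sum_tailBound_erase_le hp hp1) hS.le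
    refine (sum_le_sum fun c _ => hfirst c).trans ?_
    rw [← mul_sum, ← mul_sum, sum_add_distrib, sum_const, card_univ, Fintype.card_fin,
      nsmul_eq_mul, Nat.factorial_succ, mul_comm (n + 1), Nat.cast_mul, mul_assoc]
    rw [Fintype.card_fin] at hsum
    refine mul_le_mul_of_nonneg_left ?_ n.factorial.cast_nonneg
    linarith

lemma logTailSum_le_of_sum_eq_one {q : Fin n → ℝ} (hq : ∀ i, 0 ≤ q i) (hs : ∑ i, q i = 1) :
    logTailSum q ≤ n.factorial * (log 2 / 2 - ∑ j, negMulLog (1 - q j)) := by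
  have hle : ∀ j, q j ≤ 1 := fun j =>
    hs ▸ single_le_sum (fun i _ => hq i) (mem_univ j)
  refine (logTailSum_le hq).trans ?_
  rw [hs, log_one, zero_add, one_mul]
  gcongr
  calc ∑ j, cubicBound (q j / 1)
      ≤ ∑ j, ((1 - q j) * log (1 - q j) + log 2 / 2 * q j) :=
        sum_le_sum fun j _ => by rw [div_one]; exact cubicBound_le (hq j) (hle j)
    _ = log 2 / 2 - ∑ j, negMulLog (1 - q j) := by
        simp only [negMulLog, neg_mul, sum_neg_distrib, sum_add_distrib, ← mul_sum, hs]
        ring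

end LogTail

section Entropy

/-- The summand is the probability of `σ` when its values are drawn one after the other, each
proportionally to `W` among the columns not yet taken. -/
lemma sum_prod_div_tail_le_one {n : ℕ} {W : Fin n → Fin n → ℝ} (hW : ∀ i j, 0 ≤ W i j) :
    ∑ σ : Perm (Fin n), ∏ i, W i (σ i) / ∑ k ∈ Ici i, W i (σ k) ≤ 1 := by
  induction n with
  | zero => simp
  | succ n ih =>
    have hfirst : ∀ c : Fin (n + 1), ∑ e : Perm (Fin n),
        ∏ i, W i (Perm.decomposeFin.symm (c, e) i) /
          ∑ k ∈ Ici i, W i (Perm.decomposeFin.symm (c, e) k) ≤ W 0 c / ∑ k, W 0 k := by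
      intro c
      have hrow : ∀ e : Perm (Fin n),
          ∑ k, W 0 (Perm.decomposeFin.symm (c, e) k) = ∑ k, W 0 k :=
        fun e => Equiv.sum_comp _ (W 0)
      simp only [Fin.prod_univ_succ, Fin.sum_Ici_succ, Ici_zero_eq_univ, hrow,
        Perm.decomposeFin_symm_apply_zero, Perm.decomposeFin_symm_apply_succ]
      rw [← mul_sum]
      exact mul_le_of_le_one_right (div_nonneg (hW _ _) (sum_nonneg fun _ _ => hW _ _))
        (ih (W := fun i j => W i.succ (Equiv.swap 0 c j.succ)) fun _ _ => hW _ _)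
    rw [sum_perm_succ]
    refine (sum_le_sum fun c _ => hfirst c).trans ?_
    rw [← sum_div]
    exact div_self_le_one _

lemma sum_prod_div_tail_comp_le_one {n : ℕ} {W : Fin n → Fin n → ℝ} (hW : ∀ i j, 0 ≤ W i j)
    (τ : Perm (Fin n)) :
    ∑ σ : Perm (Fin n), ∏ i, W (τ i) (σ (τ i)) / ∑ k ∈ Ici i, W (τ i) (σ (τ k)) ≤ 1 :=
  (Equiv.sum_comp (Equiv.mulRight τ) fun σ : Perm (Fin n) =>
    ∏ i, W (τ i) (σ i) / ∑ k ∈ Ici i, W (τ i) (σ k)).trans_le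
      (sum_prod_div_tail_le_one (W := fun i => W (τ i)) fun _ => hW _)

lemma sum_negMulLog_le_neg_sum_mul_log {Ω : Type*} [Fintype Ω] {μ ν : Ω → ℝ} (hμ : ∀ i, 0 ≤ μ i)
    (hμ1 : ∑ i, μ i = 1) (hν : ∀ i, 0 ≤ ν i) (hν1 : ∑ i, ν i ≤ 1)
    (hμν : ∀ i, 0 < μ i → 0 < ν i) :
    ∑ i, negMulLog (μ i) ≤ -∑ i, μ i * log (ν i) := by
  have hterm : ∀ i, negMulLog (μ i) + μ i * log (ν i) ≤ ν i - μ i := by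
    intro i
    rcases (hμ i).eq_or_lt with h | h
    · simpa [← h] using hν i
    have hlog := mul_le_mul_of_nonneg_left
      (log_le_sub_one_of_pos (div_pos (hμν i h) h)) h.le
    rw [log_div (hμν i h).ne' h.ne', mul_sub_one, mul_div_cancel₀ _ h.ne'] at hlog
    rw [negMulLog]
    linarith
  have := sum_le_sum fun i (_ : i ∈ univ) => hterm i
  rw [sum_add_distrib, sum_sub_distrib] at this
  linarith

variable {ι : Type*} [Fintype ι] [DecidableEq ι] {μ : Perm ι → ℝ}

/-- The probability that a random permutation with distribution `μ` sends `i` to `j`. -/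
def marginal (μ : Perm ι → ℝ) (i j : ι) : ℝ :=
  ∑ σ with σ i = j, μ σ

lemma marginal_nonneg (hμ : ∀ σ, 0 ≤ μ σ) (i j : ι) : 0 ≤ marginal μ i j :=
  sum_nonneg fun σ _ => hμ σ

lemma sum_marginal (i : ι) : ∑ j, marginal μ i j = ∑ σ, μ σ :=
  sum_fiberwise univ (fun σ : Perm ι => σ i) μ

lemma le_marginal_apply (hμ : ∀ σ, 0 ≤ μ σ) (σ : Perm ι) (i : ι) : μ σ ≤ marginal μ i (σ i) :=
  single_le_sum (fun σ _ => hμ σ) (by simp)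

lemma sum_mul_apply (i : ι) (h : ι → ℝ) :
    ∑ σ, μ σ * h (σ i) = ∑ j, marginal μ i j * h j := by
  simp only [marginal, sum_mul]
  rw [← sum_fiberwise univ (fun σ : Perm ι => σ i)]
  refine sum_congr rfl fun j _ => sum_congr rfl fun σ hσ => ?_
  rw [(mem_filter.1 hσ).2]

lemma sum_mul_sum_apply (h : ι → ι → ℝ) :
    ∑ σ, μ σ * ∑ i, h i (σ i) = ∑ i, ∑ j, marginal μ i j * h i j := by
  simp only [mul_sum]
  rw [sum_comm]
  exact sum_congr rfl fun i _ => sum_mul_apply i (h i)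

/-- The Bethe entropy of a doubly stochastic matrix. -/
def betheEntropy (γ : ι → ι → ℝ) : ℝ :=
  ∑ i, ∑ j, (negMulLog (γ i j) - negMulLog (1 - γ i j))

/-- The part `γ (τ i) (σ (τ i)) + γ (τ i) (σ (τ (i + 1))) + ⋯` of row `τ i` that is still available
when the rows are visited in the order `τ` and the earlier ones have taken the columns `σ`
prescribes. -/
def orderTail {n : ℕ} (γ : Fin n → Fin n → ℝ) (τ σ : Perm (Fin n)) (i : Fin n) : ℝ :=
  ∑ k ∈ Ici i, γ (τ i) (σ (τ k))

section Fin

variable {n : ℕ} {μ : Perm (Fin n) → ℝ}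

/-- Gibbs' inequality against the sequential draw along `τ`. -/
lemma sum_negMulLog_le_of_order (hμ : ∀ σ, 0 ≤ μ σ) (hμ1 : ∑ σ, μ σ = 1) (τ : Perm (Fin n)) :
    ∑ σ, negMulLog (μ σ) ≤ ∑ σ, μ σ * ∑ i, log (orderTail (marginal μ) τ σ i) +
      ∑ i, ∑ j, negMulLog (marginal μ i j) := by
  set γ := marginal μ
  have hγ : ∀ i j, 0 ≤ γ i j := marginal_nonneg hμ
  have hγσ : ∀ σ, 0 < μ σ → ∀ i, 0 < γ i (σ i) := fun σ hσ i =>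
    hσ.trans_le (le_marginal_apply hμ σ i)
  have hT : ∀ σ, 0 < μ σ → ∀ i, 0 < orderTail γ τ σ i := fun σ hσ i =>
    sum_pos' (fun _ _ => hγ _ _) ⟨i, mem_Ici.2 le_rfl, hγσ σ hσ (τ i)⟩
  have hgibbs := sum_negMulLog_le_neg_sum_mul_log hμ hμ1
    (ν := fun σ => ∏ i, γ (τ i) (σ (τ i)) / orderTail γ τ σ i)
    (fun σ => prod_nonneg fun i _ => div_nonneg (hγ _ _) (sum_nonneg fun _ _ => hγ _ _))
    (sum_prod_div_tail_comp_le_one hγ τ)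
    (fun σ hσ => prod_pos fun i _ => div_pos (hγσ σ hσ _) (hT σ hσ i))
  have hlog : ∀ σ, μ σ * log (∏ i, γ (τ i) (σ (τ i)) / orderTail γ τ σ i) =
      μ σ * ∑ i, log (γ i (σ i)) - μ σ * ∑ i, log (orderTail γ τ σ i) := by
    intro σ
    rcases (hμ σ).eq_or_lt with h | h
    · simp [← h]
    rw [log_prod fun i _ => (div_pos (hγσ σ h _) (hT σ h i)).ne', ← mul_sub,
      ← Equiv.sum_comp τ fun i => log (γ i (σ i)), ← sum_sub_distrib]
    simp only [log_div (hγσ σ h _).ne' (hT σ h _).ne']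
  refine hgibbs.trans_eq ?_
  rw [sum_congr rfl fun σ _ => hlog σ, sum_sub_distrib,
    sum_mul_sum_apply fun i j => log (γ i j)]
  simp only [negMulLog, neg_mul, sum_neg_distrib]
  ring

/-- For fixed `σ` substitute `i = τ⁻¹ r` and `ρ = σ * τ`; averaging over `σ` then only involves
the column `σ r`. -/
lemma sum_order_sum_log_orderTail :
    ∑ τ : Perm (Fin n), ∑ σ, μ σ * ∑ i, log (orderTail (marginal μ) τ σ i) =
      ∑ r, logTailSum (marginal μ r) := by
  set γ := marginal μ
  let t : Perm (Fin n) → Fin n → Fin n → ℝ := fun ρ r c =>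
    log (∑ k ∈ Ici (ρ.symm c), γ r (ρ k))
  have hsub : ∀ σ : Perm (Fin n), ∑ τ : Perm (Fin n), ∑ i, log (orderTail γ τ σ i) =
      ∑ ρ : Perm (Fin n), ∑ r, t ρ r (σ r) := by
    intro σ
    rw [← Equiv.sum_comp (Equiv.mulLeft σ) fun ρ => ∑ r, t ρ r (σ r)]
    refine sum_congr rfl fun τ _ => Eq.trans ?_ (Equiv.sum_comp τ _)
    simp [t, orderTail, Equiv.Perm.mul_def]
  calc ∑ τ : Perm (Fin n), ∑ σ, μ σ * ∑ i, log (orderTail γ τ σ i)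
      = ∑ σ, μ σ * ∑ τ : Perm (Fin n), ∑ i, log (orderTail γ τ σ i) := by
        rw [sum_comm]
        simp only [mul_sum]
    _ = ∑ ρ : Perm (Fin n), ∑ σ, μ σ * ∑ r, t ρ r (σ r) := by
        simp only [hsub, mul_sum]
        exact sum_comm
    _ = ∑ ρ : Perm (Fin n), ∑ r, ∑ c, γ r c * t ρ r c :=
        sum_congr rfl fun ρ _ => sum_mul_sum_apply (t ρ)
    _ = ∑ r, logTailSum (γ r) := by
        rw [sum_comm]
        refine sum_congr rfl fun r _ => sum_congr rfl fun ρ _ => ?_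
        rw [← Equiv.sum_comp ρ]
        simp only [t, Equiv.symm_apply_apply]

lemma sum_negMulLog_le_betheEntropy_fin (hμ : ∀ σ, 0 ≤ μ σ) (hμ1 : ∑ σ, μ σ = 1) :
    ∑ σ, negMulLog (μ σ) ≤ betheEntropy (marginal μ) + n * (log 2 / 2) := by
  set γ := marginal μ
  have hfact : (0 : ℝ) < n.factorial := by exact_mod_cast n.factorial_pos
  have hrow : ∀ r, ∑ j, γ r j = 1 := fun r => (sum_marginal r).trans hμ1
  refine le_of_mul_le_mul_left ?_ hfact
  calc n.factorial * ∑ σ, negMulLog (μ σ)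
      = ∑ _τ : Perm (Fin n), ∑ σ, negMulLog (μ σ) := by
        rw [sum_const, card_univ, Fintype.card_perm, Fintype.card_fin, nsmul_eq_mul]
    _ ≤ ∑ τ : Perm (Fin n), (∑ σ, μ σ * ∑ i, log (orderTail γ τ σ i) +
          ∑ i, ∑ j, negMulLog (γ i j)) :=
        sum_le_sum fun τ _ => sum_negMulLog_le_of_order hμ hμ1 τ
    _ = ∑ r, logTailSum (γ r) + n.factorial * ∑ i, ∑ j, negMulLog (γ i j) := by
        rw [sum_add_distrib, sum_order_sum_log_orderTail, sum_const, card_univ,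
          Fintype.card_perm, Fintype.card_fin, nsmul_eq_mul]
    _ ≤ ∑ r, n.factorial * (log 2 / 2 - ∑ j, negMulLog (1 - γ r j)) +
          n.factorial * ∑ i, ∑ j, negMulLog (γ i j) := by
        gcongr with r
        exact logTailSum_le_of_sum_eq_one (marginal_nonneg hμ r) (hrow r)
    _ = n.factorial * (betheEntropy γ + n * (log 2 / 2)) := by
        simp only [betheEntropy, ← mul_sum, sum_sub_distrib, sum_const, card_univ,
          Fintype.card_fin, nsmul_eq_mul]
        ring

end Fin

lemma sum_negMulLog_le_betheEntropy (hμ : ∀ σ, 0 ≤ μ σ) (hμ1 : ∑ σ, μ σ = 1) :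
    ∑ σ, negMulLog (μ σ) ≤ betheEntropy (marginal μ) + Fintype.card ι * (log 2 / 2) := by
  let e := Fintype.equivFin ι
  let μ' : Perm (Fin (Fintype.card ι)) → ℝ := fun σ => μ (e.permCongr.symm σ)
  have hmarginal : ∀ i j, marginal μ' (e i) (e j) = marginal μ i j := fun i j =>
    (sum_equiv e.permCongr (by simp) (by simp only [μ', Equiv.symm_apply_apply, implies_true])).symm
  have hentropy : betheEntropy (marginal μ') = betheEntropy (marginal μ) := by
    simp only [betheEntropy, ← Equiv.sum_comp e, hmarginal]
  have h := sum_negMulLog_le_betheEntropy_fin (μ := μ') (fun σ => hμ _)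
    ((Equiv.sum_comp e.permCongr.symm μ).trans hμ1)
  rwa [hentropy, Equiv.sum_comp e.permCongr.symm fun σ => negMulLog (μ σ)] at h

end Entropy

/-! ### Schrijver's permanent inequality -/

section MatchSum

/-- The value of `F` at `S` with `a` and `b` deleted, taken to be `0` unless both lie in `S`. -/
def erasePair {V : Type*} [DecidableEq V] (a b : V) (F : Finset V → ℝ) (S : Finset V) : ℝ :=
  if a ∈ S ∧ b ∈ S then F ((S.erase a).erase b) else 0

section ErasePair

variable {V : Type*} [DecidableEq V] {a b u : V} {S : Finset V} (F : Finset V → ℝ)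

lemma erasePair_comm : erasePair a b F S = erasePair b a F S := by
  simp only [erasePair, and_comm, erase_right_comm]

lemma erasePair_of_notMem (ha : a ∉ S) : erasePair a b F S = 0 :=
  if_neg fun h => ha h.1

lemma erasePair_insert_self (hab : a ≠ b) (ha : a ∉ S) :
    erasePair a b F (insert a S) = if b ∈ S then F (S.erase b) else 0 := by
  simp [erasePair, hab.symm, erase_insert ha]

lemma erasePair_insert_of_ne (ha : u ≠ a) (hb : u ≠ b) :
    erasePair a b F (insert u S) = erasePair a b (fun T => F (insert u T)) S := by
  simp only [erasePair, mem_insert, ha.symm, hb.symm, false_or, erase_insert_of_ne ha,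
    erase_insert_of_ne hb]

lemma sum_mul_erasePair_erase (k : V → ℝ) :
    ∑ x ∈ S, k x * erasePair a b F (S.erase x) =
      erasePair a b (fun T => ∑ x ∈ T, k x * F (T.erase x)) S := by
  unfold erasePair
  by_cases hS : a ∈ S ∧ b ∈ S
  · rw [if_pos hS]
    refine (sum_subset_zero_on_sdiff ((erase_subset _ _).trans (erase_subset _ _)) ?_ ?_).symm
    · intro x hx
      rw [if_neg, mul_zero]
      simp only [mem_sdiff, mem_erase] at hx ⊢
      tauto
    · intro x hx
      simp only [mem_erase] at hx
      rw [if_pos (by simp [hS, Ne.symm hx.1, Ne.symm hx.2.1]),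
        erase_right_comm (a := b), erase_right_comm (a := a)]
  · rw [if_neg hS]
    refine sum_eq_zero fun x _ => ?_
    rw [if_neg fun h => hS ⟨mem_of_mem_erase h.1, mem_of_mem_erase h.2⟩, mul_zero]

end ErasePair

variable {α β : Type*} [DecidableEq α] [DecidableEq β]

/-- The sum over the matchings in `E` of the vertices `S` of the product of the edge weights `A` of
the matching and of the vertex weights `w` of the unmatched vertices. -/
def matchSum (A : α → β → ℝ) (w : α ⊕ β → ℝ) : List (α × β) → Finset (α ⊕ β) → ℝ
  | [], S => ∏ v ∈ S, w v
  | e :: E, S => matchSum A w E S +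
      A e.1 e.2 * erasePair (Sum.inl e.1) (Sum.inr e.2) (matchSum A w E) S

/-- The total weight of the edges in `E` joining `u` and `x`. -/
def edgeWeight (A : α → β → ℝ) : List (α × β) → α ⊕ β → α ⊕ β → ℝ
  | [], _, _ => 0
  | e :: E, u, x => edgeWeight A E u x +
      if (u = Sum.inl e.1 ∧ x = Sum.inr e.2) ∨ (u = Sum.inr e.2 ∧ x = Sum.inl e.1)
        then A e.1 e.2 else 0

variable {A : α → β → ℝ} {w : α ⊕ β → ℝ} {E : List (α × β)} {S : Finset (α ⊕ β)} {u v : α ⊕ β}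

lemma edgeWeight_nonneg (hA : ∀ i j, 0 ≤ A i j) : 0 ≤ edgeWeight A E u v := by
  induction E with
  | nil => exact le_rfl
  | cons e E ih =>
    rw [edgeWeight]
    split_ifs
    · exact add_nonneg ih (hA _ _)
    · simpa using ih

lemma edgeWeight_eq_zero (h : u.isLeft = v.isLeft) : edgeWeight A E u v = 0 := by
  induction E with
  | nil => rfl
  | cons e E ih =>
    rw [edgeWeight, ih, if_neg, add_zero]
    rintro (⟨rfl, rfl⟩ | ⟨rfl, rfl⟩) <;> simp at h

lemma edgeWeight_inl_inr (hE : E.Nodup) (i : α) (j : β) :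
    edgeWeight A E (Sum.inl i) (Sum.inr j) = if (i, j) ∈ E then A i j else 0 := by
  induction E with
  | nil => rfl
  | cons e E ih =>
    obtain ⟨he, hE⟩ := List.nodup_cons.1 hE
    rw [edgeWeight, ih hE]
    by_cases h : (i, j) = e
    · subst h
      simp [he]
    · have : ¬ (i = e.1 ∧ j = e.2) := fun h' => h (Prod.ext h'.1 h'.2)
      simp [h, this]

lemma matchSum_nonneg (hA : ∀ i j, 0 ≤ A i j) (hw : ∀ v, 0 ≤ w v) : 0 ≤ matchSum A w E S := by
  induction E generalizing S with
  | nil => exact prod_nonneg fun _ _ => hw _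
  | cons e E ih =>
    rw [matchSum, erasePair]
    split_ifs
    · exact add_nonneg ih (mul_nonneg (hA _ _) ih)
    · simpa using ih

lemma matchSum_congr {w' : α ⊕ β → ℝ} (h : ∀ v ∈ S, w v = w' v) :
    matchSum A w E S = matchSum A w' E S := by
  induction E generalizing S with
  | nil => exact prod_congr rfl h
  | cons e E ih =>
    simp only [matchSum, erasePair]
    rw [ih h, ih fun v hv => h v (mem_of_mem_erase (mem_of_mem_erase hv))]

/-- In a matching, `u` is either unmatched or matched to some `x ∈ S`. -/
lemma matchSum_insert (hu : u ∉ S) :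
    matchSum A w E (insert u S) =
      w u * matchSum A w E S + ∑ x ∈ S, edgeWeight A E u x * matchSum A w E (S.erase x) := by
  induction E generalizing S with
  | nil => simp [matchSum, edgeWeight, prod_insert hu]
  | cons e E ih =>
    obtain ⟨i, j⟩ := e
    simp only [matchSum, edgeWeight, ih hu, add_mul, mul_add, sum_add_distrib,
      mul_left_comm _ (A i j), ← mul_sum]
    by_cases hi : u = Sum.inl i
    · subst hi
      have hSx : ∀ x, Sum.inl i ∉ S.erase x := fun x h => hu (mem_of_mem_erase h)
      simp [erasePair_insert_self _ Sum.inl_ne_inr hu, erasePair_of_notMem _ hu,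
        erasePair_of_notMem _ (hSx _), add_assoc]
    by_cases hj : u = Sum.inr j
    · subst hj
      have hSx : ∀ x, Sum.inr j ∉ S.erase x := fun x h => hu (mem_of_mem_erase h)
      simp [erasePair_comm (b := Sum.inr j), erasePair_insert_self _ Sum.inr_ne_inl hu,
        erasePair_of_notMem _ hu, erasePair_of_notMem _ (hSx _), add_assoc]
    · have hpair : erasePair (Sum.inl i) (Sum.inr j) (matchSum A w E) (insert u S) =
          w u * erasePair (Sum.inl i) (Sum.inr j) (matchSum A w E) S +
            ∑ x ∈ S, edgeWeight A E u x *
              erasePair (Sum.inl i) (Sum.inr j) (matchSum A w E) (S.erase x) := by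
        rw [erasePair_insert_of_ne _ hi hj, sum_mul_erasePair_erase]
        unfold erasePair
        split_ifs
        · exact ih fun h => hu (mem_of_mem_erase (mem_of_mem_erase h))
        · rw [mul_zero, add_zero]
      simp only [hpair, hi, hj, false_and, or_self, if_false, zero_mul, sum_const_zero, add_zero]
      ring

lemma matchSum_mul_sub_mul (huv : u ≠ v) (hu : u ∉ S) (hv : v ∉ S) :
    matchSum A w E (insert u (insert v S)) * matchSum A w E S -
        matchSum A w E (insert u S) * matchSum A w E (insert v S) =
      edgeWeight A E u v * matchSum A w E S ^ 2 + ∑ x ∈ S, edgeWeight A E u x *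
        (matchSum A w E (insert v (S.erase x)) * matchSum A w E (insert x (S.erase x)) -
          matchSum A w E (insert v (insert x (S.erase x))) * matchSum A w E (S.erase x)) := by
  have hterm : ∀ x ∈ S, edgeWeight A E u x *
      (matchSum A w E (insert v (S.erase x)) * matchSum A w E (insert x (S.erase x)) -
        matchSum A w E (insert v (insert x (S.erase x))) * matchSum A w E (S.erase x)) =
      edgeWeight A E u x * matchSum A w E ((insert v S).erase x) * matchSum A w E S -
      edgeWeight A E u x * matchSum A w E (S.erase x) * matchSum A w E (insert v S) := by
    intro x hx
    rw [erase_insert_of_ne (ne_of_mem_of_not_mem hx hv).symm, insert_erase hx]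
    ring
  rw [matchSum_insert (by simp [hu, huv] : u ∉ insert v S), matchSum_insert hu, sum_insert hv,
    erase_insert hv, sum_congr rfl hterm, sum_sub_distrib, ← sum_mul, ← sum_mul]
  ring

/-- Deleting a vertex is negatively correlated with deleting one on the other side, and positively
correlated with deleting one on the same side; the two statements feed each other's induction. -/
lemma matchSum_correlation (hA : ∀ i j, 0 ≤ A i j) (huv : u ≠ v) (hu : u ∉ S) (hv : v ∉ S) :
    (u.isLeft ≠ v.isLeft → matchSum A w E (insert u S) * matchSum A w E (insert v S) ≤
      matchSum A w E (insert u (insert v S)) * matchSum A w E S) ∧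
    (u.isLeft = v.isLeft → matchSum A w E (insert u (insert v S)) * matchSum A w E S ≤
      matchSum A w E (insert u S) * matchSum A w E (insert v S)) := by
  induction S using Finset.strongInduction generalizing u v with
  | H S ih =>
    have ih' := fun x (hx : x ∈ S) => ih (S.erase x) (erase_ssubset hx)
      (ne_of_mem_of_not_mem hx hv).symm (fun h => hv (mem_of_mem_erase h)) (notMem_erase x S)
    constructor
    · intro hne
      rw [← sub_nonneg, matchSum_mul_sub_mul huv hu hv]
      refine add_nonneg (mul_nonneg (edgeWeight_nonneg hA) (sq_nonneg _))
        (sum_nonneg fun x hx => ?_)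
      by_cases hux : u.isLeft = x.isLeft
      · rw [edgeWeight_eq_zero hux, zero_mul]
      · refine mul_nonneg (edgeWeight_nonneg hA) (sub_nonneg.2 ((ih' x hx).2 ?_))
        exact (Bool.eq_not_of_ne hne.symm).trans (Bool.eq_not_of_ne (Ne.symm hux)).symm
    · intro heq
      rw [← sub_nonpos, matchSum_mul_sub_mul huv hu hv, edgeWeight_eq_zero heq, zero_mul, zero_add]
      refine sum_nonpos fun x hx => ?_
      by_cases hux : u.isLeft = x.isLeft
      · rw [edgeWeight_eq_zero hux, zero_mul]
      · exact mul_nonpos_of_nonneg_of_nonpos (edgeWeight_nonneg hA)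
          (sub_nonpos.2 ((ih' x hx).1 (heq ▸ hux)))

lemma matchSum_add_single (hu : u ∉ S) (y : ℝ) :
    matchSum A (w + Pi.single u y) E (insert u S) =
      matchSum A w E (insert u S) + y * matchSum A w E S := by
  have hcongr : ∀ T ⊆ S, matchSum A (w + Pi.single u y) E T = matchSum A w E T := fun T hT =>
    matchSum_congr fun v hv => by simp [ne_of_mem_of_not_mem (hT hv) hu]
  rw [matchSum_insert hu, matchSum_insert hu, hcongr S subset_rfl,
    sum_congr rfl fun x _ => by rw [hcongr _ (erase_subset x S)], Pi.add_apply, Pi.single_eq_same]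
  ring

lemma map_univ_erase_apply {m : ℕ} (g : Fin (m + 1) ↪ β) (c : Fin (m + 1)) :
    (univ.map g).erase (g c) =
      univ.map ((Fin.succEmb m).trans ((Equiv.swap 0 c).toEmbedding.trans g)) := by
  have hsucc : univ.map (Fin.succEmb m) = univ.erase 0 := by
    ext j
    simp [Fin.exists_succ_eq]
  rw [← map_map, hsucc, map_erase, ← map_map, univ_map_equiv_to_embedding]
  simp

lemma matchSum_zero_disjSum (hE : E.Nodup) (hE' : ∀ e, e ∈ E) {m : ℕ} (f : Fin m ↪ α)
    (g : Fin m ↪ β) :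
    matchSum A 0 E ((univ.map f).disjSum (univ.map g)) =
      ∑ σ : Perm (Fin m), ∏ i, A (f i) (g (σ i)) := by
  induction m with
  | zero =>
    have hempty : ∀ E, matchSum A 0 E ∅ = 1 := fun E => by
      induction E with
      | nil => simp [matchSum]
      | cons e E ih => simp [matchSum, erasePair, ih]
    simp [hempty]
  | succ m ih =>
    set f' : Fin m ↪ α := (Fin.succEmb m).trans f
    set g' : Fin (m + 1) → Fin m ↪ β := fun c =>
      (Fin.succEmb m).trans ((Equiv.swap 0 c).toEmbedding.trans g)
    have hrow : (univ.map f).disjSum (univ.map g) =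
        insert (Sum.inl (f 0)) ((univ.map f').disjSum (univ.map g)) := by
      ext (i | j) <;> simp [f', Fin.exists_fin_succ, eq_comm]
    have hcol : ∀ c, ((univ.map f').disjSum (univ.map g)).erase (Sum.inr (g c)) =
        (univ.map f').disjSum (univ.map (g' c)) := by
      intro c
      rw [← map_univ_erase_apply]
      ext (i | j) <;> simp
    have hf0 : Sum.inl (f 0) ∉ (univ.map f').disjSum (univ.map g) := by
      simp [f', Fin.succ_ne_zero]
    rw [hrow, matchSum_insert hf0, sum_perm_succ, sum_disjSum, sum_map, sum_map]
    simp only [edgeWeight_inl_inr hE, hE', if_true, hcol, ih]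
    rw [sum_eq_zero fun x _ => by rw [edgeWeight_eq_zero (by simp), zero_mul]]
    simp [Fin.prod_univ_succ, mul_sum, f', g']

lemma matchSum_zero_univ {ι : Type*} [Fintype ι] [DecidableEq ι] {A : Matrix ι ι ℝ}
    {E : List (ι × ι)} (hE : E.Nodup) (hE' : ∀ e, e ∈ E) : matchSum A 0 E univ = perm' A := by
  let e := (Fintype.equivFin ι).symm
  have h := matchSum_zero_disjSum (A := A) hE hE' e.toEmbedding e.toEmbedding
  rw [univ_map_equiv_to_embedding, univ_disjSum_univ] at h
  rw [h, perm', ← Equiv.sum_comp e.permCongr]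
  refine sum_congr rfl fun σ _ => ?_
  rw [← Equiv.prod_comp e]
  simp

end MatchSum

section EdgeElimination

lemma div_mul_rpow_le {p s γ : ℝ} (hp : 0 < p) (hs : 0 < s) (h0 : 0 < γ) (h1 : γ < 1) :
    p / (1 - γ) * (s * (1 - γ) ^ 2 / p) ^ γ ≤ p + γ * (1 - γ) * s := by
  have hδ : 0 < 1 - γ := sub_pos.2 h1
  have hamgm := geom_mean_le_arith_mean2_weighted hδ.le h0.le (div_pos hp hδ).le
    (mul_pos hδ hs).le (sub_add_cancel 1 γ)
  have hratio : s * (1 - γ) ^ 2 / p = (1 - γ) * s / (p / (1 - γ)) := by field_simp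
  calc p / (1 - γ) * (s * (1 - γ) ^ 2 / p) ^ γ
      = (p / (1 - γ)) ^ (1 - γ) * ((1 - γ) * s) ^ γ := by
        rw [hratio, div_rpow (mul_pos hδ hs).le (div_pos hp hδ).le,
          rpow_sub (div_pos hp hδ), rpow_one]
        ring
    _ ≤ (1 - γ) * (p / (1 - γ)) + γ * ((1 - γ) * s) := hamgm
    _ = p + γ * (1 - γ) * s := by field_simp

lemma mul_rpow_le_of_mul_eq {p q q' s B γ : ℝ} (hp : 0 < p) (hq : 0 < q) (hq' : 0 < q')
    (hs : 0 < s) (h0 : 0 < γ) (h1 : γ < 1) (hc : q * q' = p * s)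
    (h : ∀ y z, 0 < y → 0 < z → B * (y * z) ^ γ ≤ p + q * y + q' * z + s * (y * z)) :
    B * ((γ ^ γ) ^ 2 * (1 - γ)) ≤ p + γ * (1 - γ) * s := by
  have hδ : 0 < 1 - γ := sub_pos.2 h1
  have hyz : p * γ / ((1 - γ) * q) * (p * γ / ((1 - γ) * q')) = p * γ ^ 2 / (s * (1 - γ) ^ 2) := by
    rw [div_mul_div_comm, div_eq_div_iff (by positivity) (by positivity)]
    linear_combination (-(p * γ ^ 2 * (1 - γ) ^ 2)) * hc
  have hvalue : p + q * (p * γ / ((1 - γ) * q)) + q' * (p * γ / ((1 - γ) * q')) +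
      s * (p * γ ^ 2 / (s * (1 - γ) ^ 2)) = p / (1 - γ) ^ 2 := by
    field_simp
    ring
  have hbound := h (p * γ / ((1 - γ) * q)) (p * γ / ((1 - γ) * q')) (by positivity) (by positivity)
  rw [hyz, hvalue] at hbound
  have hpow : (γ ^ γ) ^ 2 =
      (p * γ ^ 2 / (s * (1 - γ) ^ 2)) ^ γ * (s * (1 - γ) ^ 2 / p) ^ γ := by
    rw [← mul_rpow (by positivity) (by positivity), sq, ← mul_rpow h0.le h0.le]
    congr 1
    field_simp
  calc B * ((γ ^ γ) ^ 2 * (1 - γ))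
      = B * (p * γ ^ 2 / (s * (1 - γ) ^ 2)) ^ γ * ((1 - γ) * (s * (1 - γ) ^ 2 / p) ^ γ) := by
        rw [hpow]
        ring
    _ ≤ p / (1 - γ) ^ 2 * ((1 - γ) * (s * (1 - γ) ^ 2 / p) ^ γ) := by gcongr
    _ = p / (1 - γ) * (s * (1 - γ) ^ 2 / p) ^ γ := by field_simp
    _ ≤ p + γ * (1 - γ) * s := div_mul_rpow_le hp hs h0 h1

lemma mul_rpow_le_of_mul_le {p q q' s B γ : ℝ} (hp : 0 ≤ p) (hq : 0 ≤ q) (hq' : 0 ≤ q')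
    (hs : 0 ≤ s) (h0 : 0 < γ) (h1 : γ < 1) (hc : q * q' ≤ p * s)
    (h : ∀ y z, 0 < y → 0 < z → B * (y * z) ^ γ ≤ p + q * y + q' * z + s * (y * z)) :
    B * ((γ ^ γ) ^ 2 * (1 - γ)) ≤ p + γ * (1 - γ) * s := by
  refine le_of_forall_pos_le_add fun ε hε => ?_
  obtain ⟨δ, hδ, rfl⟩ : ∃ δ, 0 < δ ∧ ε = δ + δ := ⟨ε / 2, half_pos hε, (add_halves ε).symm⟩
  set Q := q + δ ^ 2 / (q' + 1)
  have hQ : 0 < Q := by positivity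
  have hqQ : q ≤ Q := le_add_of_nonneg_right (by positivity)
  have hqQ' : q' ≤ (p + δ) * (s + δ) / Q := by
    have : q' * (δ ^ 2 / (q' + 1)) ≤ δ ^ 2 := by
      rw [← mul_div_assoc, div_le_iff₀ (by positivity)]
      nlinarith [sq_nonneg δ]
    rw [le_div_iff₀ hQ]
    simp only [Q]
    nlinarith [mul_nonneg hp hδ.le, mul_nonneg hs hδ.le]
  have hperturbed := mul_rpow_le_of_mul_eq (p := p + δ) (q := Q) (q' := (p + δ) * (s + δ) / Q)
    (s := s + δ) (B := B) (by positivity) hQ (by positivity) (by positivity) h0 h1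
    (mul_div_cancel₀ _ hQ.ne')
    (fun y z hy hz => (h y z hy hz).trans (by gcongr <;> linarith))
  have : γ * (1 - γ) * δ ≤ δ := mul_le_of_le_one_left hδ.le (by nlinarith)
  linarith

lemma le_of_forall_pos_le_bilinear {p q q' s B : ℝ}
    (h : ∀ y z, 0 < y → 0 < z → B ≤ p + q * y + q' * z + s * (y * z)) : B ≤ p := by
  have hlim : Filter.Tendsto (fun t : ℝ => p + q * t + q' * t + s * (t * t))
      (nhdsWithin 0 (Set.Ioi 0)) (nhds (p + q * 0 + q' * 0 + s * (0 * 0))) :=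
    (Continuous.tendsto (by fun_prop) 0).mono_left nhdsWithin_le_nhds
  have := ge_of_tendsto hlim (b := B)
    (by filter_upwards [self_mem_nhdsWithin] with t ht using h t t ht ht)
  simpa using this

/-- The factor lost by `matchSum` on eliminating an edge of marginal `γ`. Its value at `1` is the
one for which the elimination inequality stays sharp. -/
def edgeLoss (γ : ℝ) : ℝ := if γ = 1 then 1 else 1 - γ

/-- The weight `γ * (1 - γ)` of an edge of marginal `γ` in Schrijver's inequality, with the same
exceptional value at `1` as `edgeLoss`. -/
def edgeCoeff (γ : ℝ) : ℝ := if γ = 1 then 1 else γ * (1 - γ)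

lemma edgeLoss_pos {γ : ℝ} (h1 : γ ≤ 1) : 0 < edgeLoss γ := by
  unfold edgeLoss
  split_ifs with h
  · exact one_pos
  · exact sub_pos.2 (lt_of_le_of_ne h1 h)

lemma edgeCoeff_nonneg {γ : ℝ} (h0 : 0 ≤ γ) (h1 : γ ≤ 1) : 0 ≤ edgeCoeff γ := by
  unfold edgeCoeff
  split_ifs
  · exact zero_le_one
  · exact mul_nonneg h0 (sub_nonneg.2 h1)

lemma mul_edgeLoss_le {p q q' s B γ : ℝ} (hp : 0 ≤ p) (hq : 0 ≤ q) (hq' : 0 ≤ q')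
    (hs : 0 ≤ s) (h0 : 0 ≤ γ) (h1 : γ ≤ 1) (hc : q * q' ≤ p * s)
    (h : ∀ y z, 0 < y → 0 < z → B * (y * z) ^ γ ≤ p + q * y + q' * z + s * (y * z)) :
    B * ((γ ^ γ) ^ 2 * edgeLoss γ) ≤ p + edgeCoeff γ * s := by
  rcases h0.eq_or_lt with rfl | h0
  · simpa [edgeLoss, edgeCoeff] using le_of_forall_pos_le_bilinear (by simpa using h)
  rcases h1.eq_or_lt with rfl | h1
  · have hB : B ≤ s := le_of_forall_pos_le_bilinear (q := q') (q' := q) (s := p) fun y z hy hz => by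
      have := mul_le_mul_of_nonneg_right (h y⁻¹ z⁻¹ (inv_pos.2 hy) (inv_pos.2 hz))
        (mul_pos hy hz).le
      rw [rpow_one] at this
      field_simp at this
      linarith
    simpa [edgeLoss, edgeCoeff] using hB.trans (le_add_of_nonneg_left hp)
  · rw [edgeLoss, edgeCoeff, if_neg h1.ne, if_neg h1.ne]
    exact mul_rpow_le_of_mul_le hp hq hq' hs h0 h1 hc h

variable {α β : Type*} [DecidableEq α] [DecidableEq β] {γ : α → β → ℝ}

lemma mul_edgeLoss_le_matchSum_cons (h0 : ∀ i j, 0 ≤ γ i j) (h1 : ∀ i j, γ i j ≤ 1)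
    {w : α ⊕ β → ℝ} (hw : ∀ v, 0 ≤ w v) {E : List (α × β)} {S : Finset (α ⊕ β)} {i : α} {j : β}
    (hi : Sum.inl i ∈ S) (hj : Sum.inr j ∈ S) {B : ℝ}
    (h : ∀ y z, 0 < y → 0 < z → B * (y * z) ^ γ i j ≤
      matchSum (fun i j => edgeCoeff (γ i j))
        (w + Pi.single (Sum.inl i) y + Pi.single (Sum.inr j) z) E S) :
    B * ((γ i j ^ γ i j) ^ 2 * edgeLoss (γ i j)) ≤
      matchSum (fun i j => edgeCoeff (γ i j)) w ((i, j) :: E) S := by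
  have hA : ∀ i j, 0 ≤ edgeCoeff (γ i j) := fun i j => edgeCoeff_nonneg (h0 i j) (h1 i j)
  set T := (S.erase (Sum.inl i)).erase (Sum.inr j)
  have hiT : Sum.inl i ∉ T := by simp [T]
  have hjT : Sum.inr j ∉ T := by simp [T]
  have hST : S = insert (Sum.inl i) (insert (Sum.inr j) T) := by
    rw [insert_erase (mem_erase.2 ⟨Sum.inr_ne_inl, hj⟩), insert_erase hi]
  have hcorr := (matchSum_correlation (w := w) (E := E) hA Sum.inl_ne_inr hiT hjT).1 (by simp)
  have hnn : ∀ S, 0 ≤ matchSum (fun i j => edgeCoeff (γ i j)) w E S := fun S =>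
    matchSum_nonneg hA hw
  rw [matchSum, erasePair, if_pos ⟨hi, hj⟩]
  change _ ≤ _ + edgeCoeff (γ i j) * matchSum _ w E T
  refine mul_edgeLoss_le (hnn _) (hnn (insert (Sum.inr j) T)) (hnn (insert (Sum.inl i) T)) (hnn T)
    (h0 i j) (h1 i j) ?_ fun y z hy hz => (h y z hy hz).trans_eq ?_
  · rw [hST]
    linarith
  · rw [hST, insert_comm, matchSum_add_single (by simp [T]), insert_comm,
      matchSum_add_single (by simp [T]), matchSum_add_single hiT]
    ring

/-- The vertex weights given by splitting each edge `e ∈ U` into a weight `y e` at its left end and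
a weight `z e` at its right end. -/
def splitWeight (U : Finset (α × β)) (y z : α × β → ℝ) : α ⊕ β → ℝ :=
  ∑ e ∈ U, (Pi.single (Sum.inl e.1) (y e) + Pi.single (Sum.inr e.2) (z e))

lemma splitWeight_nonneg {U : Finset (α × β)} {y z : α × β → ℝ} (hy : ∀ e, 0 ≤ y e)
    (hz : ∀ e, 0 ≤ z e) : 0 ≤ splitWeight U y z :=
  sum_nonneg fun e _ => add_nonneg (Pi.single_nonneg.2 (hy e)) (Pi.single_nonneg.2 (hz e))

lemma splitWeight_insert_update {U : Finset (α × β)} {y z : α × β → ℝ} {i : α} {j : β}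
    (he : (i, j) ∉ U) (a b : ℝ) :
    splitWeight (insert (i, j) U) (Function.update y (i, j) a) (Function.update z (i, j) b) =
      splitWeight U y z + Pi.single (Sum.inl i) a + Pi.single (Sum.inr j) b := by
  have hU : ∀ e ∈ U, e ≠ (i, j) := fun e heU => ne_of_mem_of_not_mem heU he
  rw [splitWeight, sum_insert he, splitWeight, Function.update_self, Function.update_self,
    sum_congr rfl fun e heU => by
      rw [Function.update_of_ne (hU e heU), Function.update_of_ne (hU e heU)]]
  abel

variable [Fintype α] [Fintype β]

lemma exists_matchSum_ge (h0 : ∀ i j, 0 ≤ γ i j) (h1 : ∀ i j, γ i j ≤ 1) (U : Finset (α × β))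
    (E : List (α × β)) (B : ℝ)
    (h : ∀ y z : α × β → ℝ, (∀ e, 0 < y e) → (∀ e, 0 < z e) →
      B * ∏ e ∈ U, (y e * z e) ^ γ e.1 e.2 ≤
        matchSum (fun i j => edgeCoeff (γ i j)) (splitWeight U y z) E univ) :
    ∃ E' : List (α × β), E'.Perm (U.toList ++ E) ∧
      B * ∏ e ∈ U, ((γ e.1 e.2 ^ γ e.1 e.2) ^ 2 * edgeLoss (γ e.1 e.2)) ≤
        matchSum (fun i j => edgeCoeff (γ i j)) 0 E' univ := by
  induction U using Finset.induction_on generalizing E B with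
  | empty =>
    exact ⟨E, by simp, by simpa [splitWeight] using h 1 1 (fun _ => one_pos) fun _ => one_pos⟩
  | insert e U he ih =>
    obtain ⟨i, j⟩ := e
    have hU : ∀ e ∈ U, e ≠ (i, j) := fun e heU => ne_of_mem_of_not_mem heU he
    obtain ⟨E', hE', hB⟩ := ih ((i, j) :: E) (B * ((γ i j ^ γ i j) ^ 2 * edgeLoss (γ i j)))
      fun y z hy hz => by
        rw [mul_right_comm]
        refine mul_edgeLoss_le_matchSum_cons h0 h1
          (splitWeight_nonneg (fun e => (hy e).le) fun e => (hz e).le) (mem_univ _) (mem_univ _)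
          fun a b ha hb => ?_
        have := h (Function.update y (i, j) a) (Function.update z (i, j) b)
          (Function.forall_update_iff y _ |>.2 ⟨ha, fun e _ => hy e⟩)
          (Function.forall_update_iff z _ |>.2 ⟨hb, fun e _ => hz e⟩)
        rw [splitWeight_insert_update he, prod_insert he, Function.update_self,
          Function.update_self, prod_congr rfl fun e heU => by
            rw [Function.update_of_ne (hU e heU), Function.update_of_ne (hU e heU)]] at this
        exact le_of_eq_of_le (by ring) this
    refine ⟨E', hE'.trans (List.perm_middle.trans ?_), ?_⟩
    · rw [← List.cons_append]
      exact (toList_insert he).symm.append_right _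
    · rwa [prod_insert he, ← mul_assoc]

end EdgeElimination

section Schrijver

lemma rpow_self_pos {x : ℝ} (hx : 0 ≤ x) : 0 < x ^ x := by
  rcases hx.eq_or_lt with rfl | hx
  · simp
  · exact rpow_pos_of_pos hx x

lemma prod_rpow_le_sum {ι : Type*} [Fintype ι] {g y : ι → ℝ} (hg : ∀ i, 0 ≤ g i)
    (hg1 : ∑ i, g i = 1) (hy : ∀ i, 0 < y i) :
    ∏ i, (g i ^ g i)⁻¹ * y i ^ g i ≤ ∑ i, y i := by
  calc ∏ i, (g i ^ g i)⁻¹ * y i ^ g i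
      = ∏ i, (y i / g i) ^ g i := prod_congr rfl fun i _ => by
        rw [div_rpow (hy i).le (hg i), div_eq_inv_mul]
    _ ≤ ∑ i, g i * (y i / g i) := geom_mean_le_arith_mean_weighted univ g (fun i => y i / g i)
        (fun i _ => hg i) hg1 fun i _ => div_nonneg (hy i).le (hg i)
    _ ≤ ∑ i, y i := sum_le_sum fun i _ => by
        rcases (hg i).eq_or_lt with h | h
        · simpa [← h] using (hy i).le
        · rw [mul_div_cancel₀ _ h.ne']

variable {ι : Type*} [Fintype ι] [DecidableEq ι] {γ : Matrix ι ι ℝ}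

lemma splitWeight_univ_inl (y z : ι × ι → ℝ) (i : ι) :
    splitWeight univ y z (Sum.inl i) = ∑ j, y (i, j) := by
  simp [splitWeight, Fintype.sum_prod_type_right, Pi.single_apply]

lemma splitWeight_univ_inr (y z : ι × ι → ℝ) (j : ι) :
    splitWeight univ y z (Sum.inr j) = ∑ i, z (i, j) := by
  simp [splitWeight, Fintype.sum_prod_type, Pi.single_apply]

lemma prod_rpow_le_prod_splitWeight (hγ : γ ∈ doublyStochastic ℝ ι) {y z : ι × ι → ℝ}
    (hy : ∀ e, 0 < y e) (hz : ∀ e, 0 < z e) :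
    (∏ i, ∏ j, ((γ i j ^ γ i j) ^ 2)⁻¹) * ∏ e : ι × ι, (y e * z e) ^ γ e.1 e.2 ≤
      ∏ v, splitWeight univ y z v := by
  obtain ⟨h0, hr, hc⟩ := mem_doublyStochastic_iff_sum.1 hγ
  have hnn : ∀ {x : ι × ι → ℝ}, (∀ e, 0 < x e) → ∀ i j,
      0 ≤ (γ i j ^ γ i j)⁻¹ * x (i, j) ^ γ i j := fun hx i j =>
    mul_nonneg (inv_nonneg.2 (rpow_self_pos (h0 i j)).le) (rpow_nonneg (hx _).le _)
  calc (∏ i, ∏ j, ((γ i j ^ γ i j) ^ 2)⁻¹) * ∏ e : ι × ι, (y e * z e) ^ γ e.1 e.2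
      = (∏ i, ∏ j, (γ i j ^ γ i j)⁻¹ * y (i, j) ^ γ i j) *
          ∏ j, ∏ i, (γ i j ^ γ i j)⁻¹ * z (i, j) ^ γ i j := by
        rw [prod_comm (f := fun j i => (γ i j ^ γ i j)⁻¹ * z (i, j) ^ γ i j),
          Fintype.prod_prod_type]
        simp only [← prod_mul_distrib]
        refine prod_congr rfl fun i _ => prod_congr rfl fun j _ => ?_
        rw [mul_rpow (hy _).le (hz _).le, sq, mul_inv]
        ring
    _ ≤ (∏ i, ∑ j, y (i, j)) * ∏ j, ∑ i, z (i, j) := by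
        refine mul_le_mul
          (prod_le_prod (fun i _ => prod_nonneg fun j _ => hnn hy i j) fun i _ => ?_)
          (prod_le_prod (fun j _ => prod_nonneg fun i _ => hnn hz i j) fun j _ => ?_)
          (prod_nonneg fun j _ => prod_nonneg fun i _ => hnn hz i j)
          (prod_nonneg fun i _ => sum_nonneg fun j _ => (hy _).le)
        · exact prod_rpow_le_sum (h0 i) (hr i) fun j => hy (i, j)
        · exact prod_rpow_le_sum (fun i => h0 i j) (hc j) fun i => hz (i, j)
    _ = ∏ v, splitWeight univ y z v := by
        simp only [Fintype.prod_sum_type, splitWeight_univ_inl, splitWeight_univ_inr]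

lemma prod_edgeLoss_le_perm' (hγ : γ ∈ doublyStochastic ℝ ι) :
    ∏ i, ∏ j, edgeLoss (γ i j) ≤ perm' (γ.map edgeCoeff) := by
  obtain ⟨E, hE, hbound⟩ := exists_matchSum_ge (γ := γ)
    (fun i j => nonneg_of_mem_doublyStochastic hγ)
    (fun i j => le_one_of_mem_doublyStochastic hγ) univ []
    (∏ i, ∏ j, ((γ i j ^ γ i j) ^ 2)⁻¹) fun y z hy hz => by
      rw [matchSum]
      exact prod_rpow_le_prod_splitWeight hγ hy hz
  have hnodup : E.Nodup := hE.symm.nodup (by simpa using nodup_toList _)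
  refine le_of_eq_of_le ?_ (hbound.trans_eq (matchSum_zero_univ (A := γ.map edgeCoeff) hnodup
    fun e => hE.symm.subset (by simp)))
  rw [Fintype.prod_prod_type]
  simp only [← prod_mul_distrib]
  refine prod_congr rfl fun i _ => prod_congr rfl fun j _ => ?_
  have := (rpow_self_pos (nonneg_of_mem_doublyStochastic hγ (i := i) (j := j))).ne'
  field_simp

end Schrijver

/-! ### Counting sequences of permutations by type -/

section Types

variable {ι κ : Type*} [DecidableEq ι] [Fintype κ] {M : ℕ} {K : ι → ι → ℕ}

/-- The type of a sequence `s` of permutations: its `(i, j)` entry counts the members of `s` that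
send `i` to `j`. -/
def permType (s : κ → Perm ι) (i j : ι) : ℕ :=
  #{m | s m i = j}

/-- The permutation matrix of `σ`. It is a function rather than a `Matrix` so that types can be
compared entrywise with `≤`. -/
def permIndicator (σ : Perm ι) (i j : ι) : ℕ :=
  if σ i = j then 1 else 0

lemma permIndicator_le_iff {σ : Perm ι} : permIndicator σ ≤ K ↔ ∀ i, K i (σ i) ≠ 0 := by
  refine ⟨fun h i => ?_, fun h i j => ?_⟩
  · have : 1 ≤ K i (σ i) := (if_pos rfl).symm.trans_le (h i (σ i))
    exact Nat.one_le_iff_ne_zero.1 this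
  · unfold permIndicator
    split_ifs with hj
    · exact hj ▸ Nat.one_le_iff_ne_zero.2 (h i)
    · exact Nat.zero_le _

lemma permIndicator_injective :
    Function.Injective (permIndicator : Perm ι → ι → ι → ℕ) := fun σ τ h => by
  ext i
  by_contra hne
  simpa [permIndicator, Ne.symm hne] using congrFun₂ h i (σ i)

lemma permType_fin_one (s : Fin 1 → Perm ι) : permType s = permIndicator (s 0) := by
  ext i j
  rw [permType, card_filter, Fin.sum_univ_one, permIndicator]

lemma permType_cons (σ : Perm ι) (s : Fin M → Perm ι) :
    permType (Fin.cons σ s : Fin (M + 1) → Perm ι) = permIndicator σ + permType s := by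
  ext i j
  simp only [permType, permIndicator, card_filter, Fin.sum_univ_succ, Fin.cons_zero,
    Fin.cons_succ, Pi.add_apply]

lemma permIndicator_head_le (s : Fin (M + 1) → Perm ι) : permIndicator (s 0) ≤ permType s := by
  conv_rhs => rw [← Fin.cons_self_tail s, permType_cons]
  exact le_self_add

lemma permType_comp (s : κ → Perm ι) (e : Perm κ) : permType (s ∘ e) = permType s := by
  ext i j
  simp only [permType, card_filter, Function.comp_apply]
  exact Equiv.sum_comp e fun m => if s m i = j then 1 else 0

variable [Fintype ι]

/-- The number of sequences of `M` permutations of type `K`. -/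
def typeCount (M : ℕ) (K : ι → ι → ℕ) : ℕ :=
  #{s : Fin M → Perm ι | permType s = K}

/-- The number of sequences of `M + 1` permutations of type `K` starting with `σ`. -/
def headCount (M : ℕ) (K : ι → ι → ℕ) (σ : Perm ι) : ℕ :=
  #{s : Fin (M + 1) → Perm ι | permType s = K ∧ s 0 = σ}

lemma headCount_permIndicator_add (K : ι → ι → ℕ) (σ : Perm ι) :
    headCount M (permIndicator σ + K) σ = typeCount M K := by
  symm
  refine card_bij (fun s _ => Fin.cons σ s) (fun s hs => ?_)
    (fun s _ t _ h => (Fin.cons_injective2 h).2) fun s hs => ⟨Fin.tail s, ?_, ?_⟩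
  · simpa [permType_cons] using hs
  · obtain ⟨hs, rfl⟩ : permType s = permIndicator σ + K ∧ s 0 = σ := by simpa using hs
    rw [← Fin.cons_self_tail s, permType_cons] at hs
    simpa using hs
  · rw [← (mem_filter.1 hs).2.2, Fin.cons_self_tail]

lemma permIndicator_le_of_headCount_ne_zero {σ : Perm ι} (h : headCount M K σ ≠ 0) :
    permIndicator σ ≤ K := by
  obtain ⟨s, hs⟩ := card_ne_zero.1 h
  obtain ⟨rfl, rfl⟩ : permType s = K ∧ s 0 = σ := by simpa using hs
  exact permIndicator_head_le s

lemma sum_headCount_filter (p : Perm ι → Prop) [DecidablePred p] :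
    ∑ σ with p σ, headCount M K σ = #{s : Fin (M + 1) → Perm ι | permType s = K ∧ p (s 0)} := by
  rw [card_eq_sum_card_fiberwise (f := fun s => s 0) (t := {σ | p σ}) fun s hs => by
    simpa using (mem_filter.1 hs).2.2]
  refine sum_congr rfl fun σ hσ => ?_
  rw [headCount, filter_filter]
  refine congrArg card (filter_congr fun s _ => ⟨?_, fun h => ⟨h.1.1, h.2⟩⟩)
  rintro ⟨hs, rfl⟩
  exact ⟨⟨hs, (mem_filter.1 hσ).2⟩, rfl⟩

lemma sum_headCount : ∑ σ, headCount M K σ = typeCount (M + 1) K := by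
  simpa [typeCount] using sum_headCount_filter (M := M) (K := K) fun _ => True

lemma card_permType_apply_eq (m : Fin (M + 1)) (i j : ι) :
    #{s : Fin (M + 1) → Perm ι | permType s = K ∧ s m i = j} =
      #{s : Fin (M + 1) → Perm ι | permType s = K ∧ s 0 i = j} := by
  refine card_bij (fun s _ => s ∘ Equiv.swap 0 m) (fun s hs => ?_)
    (fun s _ t _ h => (Equiv.swap 0 m).surjective.injective_comp_right h)
    fun s hs => ⟨s ∘ Equiv.swap 0 m, ?_, ?_⟩
  · simpa [permType_comp] using hs
  · simpa [permType_comp] using hs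
  · ext1 k
    simp

lemma sum_card_permType_apply_eq (i j : ι) :
    ∑ m, #{s : Fin M → Perm ι | permType s = K ∧ s m i = j} = typeCount M K * K i j := by
  simp only [card_filter]
  rw [sum_comm, typeCount, card_filter, sum_mul]
  refine sum_congr rfl fun s _ => ?_
  by_cases h : permType s = K
  · simp only [h, true_and, if_true, one_mul]
    rw [← h, permType, card_filter]
  · simp [h]

lemma mul_sum_headCount_filter (i j : ι) :
    (M + 1) * ∑ σ with σ i = j, headCount M K σ = typeCount (M + 1) K * K i j := by
  rw [sum_headCount_filter, ← sum_card_permType_apply_eq,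
    sum_congr rfl fun m _ => card_permType_apply_eq m i j]
  simp

end Types

section Semimagic

variable {ι : Type*} [Fintype ι] {M : ℕ} {K : ι → ι → ℕ}

/-- The nonnegative integer matrices all of whose rows and columns sum to `M`. -/
def IsSemimagic (M : ℕ) (K : ι → ι → ℕ) : Prop :=
  (∀ i, ∑ j, K i j = M) ∧ ∀ j, ∑ i, K i j = M

lemma IsSemimagic.le (hK : IsSemimagic M K) (i j : ι) : K i j ≤ M := by
  rw [← hK.1 i]
  exact single_le_sum (fun _ _ => Nat.zero_le _) (mem_univ j)

/-- The matrix `K / M`, doubly stochastic if all rows and columns of `K` sum to `M ≠ 0`. -/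
def typeDensity (M : ℕ) (K : ι → ι → ℕ) (i j : ι) : ℝ :=
  K i j / M

lemma IsSemimagic.typeDensity_le_one (hK : IsSemimagic (M + 1) K) {i j : ι} :
    typeDensity (M + 1) K i j ≤ 1 :=
  div_le_one_of_le₀ (Nat.cast_le.2 (hK.le i j)) (Nat.cast_nonneg _)

variable [DecidableEq ι]

lemma IsSemimagic.typeDensity_mem (hK : IsSemimagic (M + 1) K) :
    Matrix.of (typeDensity (M + 1) K) ∈ doublyStochastic ℝ ι := by
  have hM : ((M + 1 : ℕ) : ℝ) ≠ 0 := by positivity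
  refine mem_doublyStochastic_iff_sum.2 ⟨fun i j => ?_, fun i => ?_, fun j => ?_⟩ <;>
    simp only [Matrix.of_apply, typeDensity]
  · positivity
  · rw [← sum_div, ← Nat.cast_sum, hK.1 i, div_self hM]
  · rw [← sum_div, ← Nat.cast_sum, hK.2 j, div_self hM]

lemma isSemimagic_permIndicator (σ : Perm ι) : IsSemimagic 1 (permIndicator σ) :=
  ⟨fun i => by simp [permIndicator], fun j => by simp [permIndicator, ← Equiv.eq_symm_apply]⟩

lemma isSemimagic_permIndicator_add {σ : Perm ι} :
    IsSemimagic (M + 1) (permIndicator σ + K) ↔ IsSemimagic M K := by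
  simp only [IsSemimagic, Pi.add_apply, sum_add_distrib, (isSemimagic_permIndicator σ).1,
    (isSemimagic_permIndicator σ).2, add_comm 1, add_left_inj]

lemma isSemimagic_permType {κ : Type*} [Fintype κ] (s : κ → Perm ι) :
    IsSemimagic (Fintype.card κ) (permType s) := by
  refine ⟨fun i => ?_, fun j => ?_⟩ <;> simp only [permType, card_filter] <;> rw [sum_comm]
  · simp
  · simp [← Equiv.eq_symm_apply]

end Semimagic

/-! ### Comparing the coefficients -/

section BetheCount

/-- The contribution of a block containing `k` of the `M` elements of its row to the average over
the liftings, see `betheCount`. -/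
def betheFactor (M k : ℕ) : ℝ :=
  (M - k).factorial / (k.factorial * M.factorial)

lemma betheFactor_pos (M k : ℕ) : 0 < betheFactor M k := by
  unfold betheFactor
  positivity

lemma betheFactor_mul_edgeLoss {M k : ℕ} (hk : k ≤ M) :
    betheFactor M k * edgeLoss (k / (M + 1 : ℕ)) = betheFactor (M + 1) k := by
  have h1 : (k : ℝ) / (M + 1 : ℕ) ≠ 1 := by
    rw [Ne, div_eq_one_iff_eq (by positivity), Nat.cast_inj]
    lia
  obtain ⟨l, rfl⟩ := Nat.exists_eq_add_of_le hk
  rw [edgeLoss, if_neg h1, betheFactor, betheFactor, show k + l + 1 - k = l + 1 by lia,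
    Nat.add_sub_cancel_left, Nat.factorial_succ, Nat.factorial_succ]
  push_cast
  field_simp
  ring

lemma betheFactor_mul_edgeLoss_succ {M k : ℕ} (hk : k ≤ M) :
    betheFactor M k * edgeLoss ((1 + k : ℕ) / (M + 1 : ℕ)) =
      (M + 1 : ℕ) ^ 2 * edgeCoeff ((1 + k : ℕ) / (M + 1 : ℕ)) * betheFactor (M + 1) (1 + k) := by
  obtain ⟨l, rfl⟩ := Nat.exists_eq_add_of_le hk
  rw [betheFactor, betheFactor, show k + l + 1 - (1 + k) = l by lia,
    Nat.add_sub_cancel_left, add_comm 1 k, Nat.factorial_succ, Nat.factorial_succ]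
  rcases Nat.eq_zero_or_pos l with rfl | hl
  · have : (((k + 1 : ℕ) : ℝ) / (k + 0 + 1 : ℕ)) = 1 := div_self (by positivity)
    rw [this, edgeLoss, edgeCoeff, if_pos rfl, if_pos rfl]
    push_cast
    field_simp
    ring
  · have h1 : ((k + 1 : ℕ) : ℝ) / (k + l + 1 : ℕ) ≠ 1 := by
      rw [Ne, div_eq_one_iff_eq (by positivity), Nat.cast_inj]
      lia
    rw [edgeLoss, edgeCoeff, if_neg h1, if_neg h1]
    push_cast
    field_simp

variable {ι : Type*} [Fintype ι]

/-- The coefficient of `∏ i, ∏ j, θ i j ^ K i j` in the average permanent of the `M`-liftings of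
`θ`, see `avgLiftPerm_eq`. -/
def betheCount (M : ℕ) (K : ι → ι → ℕ) : ℝ :=
  ∏ i, ((M.factorial : ℝ) ^ 2 * ∏ j, betheFactor M (K i j))

lemma betheCount_pos (M : ℕ) (K : ι → ι → ℕ) : 0 < betheCount M K :=
  prod_pos fun _ _ => mul_pos (by positivity) (prod_pos fun _ _ => betheFactor_pos _ _)

variable {M : ℕ} {K : ι → ι → ℕ}

lemma betheCount_one (hK : IsSemimagic 1 K) : betheCount 1 K = 1 := by
  refine prod_eq_one fun i _ => ?_
  rw [prod_eq_one fun j _ => ?_]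
  · simp
  · have := hK.le i j
    interval_cases K i j <;> simp [betheFactor]

lemma prod_edgeLoss_pos (hK : IsSemimagic (M + 1) K) :
    0 < ∏ i, ∏ j, edgeLoss (typeDensity (M + 1) K i j) :=
  prod_pos fun _ _ => prod_pos fun _ _ => edgeLoss_pos hK.typeDensity_le_one

variable [DecidableEq ι]

lemma betheCount_mul_edgeLoss {σ : Perm ι} (hK : IsSemimagic M K) :
    betheCount M K * ∏ i, ∏ j, edgeLoss (typeDensity (M + 1) (permIndicator σ + K) i j) =
      betheCount (M + 1) (permIndicator σ + K) *
        ∏ i, edgeCoeff (typeDensity (M + 1) (permIndicator σ + K) i (σ i)) := by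
  rw [betheCount, betheCount, ← prod_mul_distrib, ← prod_mul_distrib]
  refine prod_congr rfl fun i _ => ?_
  have hoff : ∀ j ∈ univ.erase (σ i), betheFactor M (K i j) *
      edgeLoss (typeDensity (M + 1) (permIndicator σ + K) i j) =
        betheFactor (M + 1) ((permIndicator σ + K) i j) := fun j hj => by
    have : permIndicator σ i j = 0 := if_neg (ne_of_mem_erase hj).symm
    rw [typeDensity, Pi.add_apply, Pi.add_apply, this, zero_add,
      betheFactor_mul_edgeLoss (hK.le i j)]
  have hdiag : permIndicator σ i (σ i) = 1 := if_pos rfl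
  rw [mul_assoc, ← prod_mul_distrib, ← mul_prod_erase _ _ (mem_univ (σ i)),
    ← mul_prod_erase _ (fun j => betheFactor _ _) (mem_univ (σ i)), prod_congr rfl hoff,
    typeDensity, Pi.add_apply, Pi.add_apply, hdiag, betheFactor_mul_edgeLoss_succ (hK.le i _),
    Nat.factorial_succ]
  push_cast
  ring

end BetheCount

section LowerBound

variable {ι : Type*} [Fintype ι] [DecidableEq ι] {M : ℕ} {K : ι → ι → ℕ}

lemma typeCount_zero : typeCount 0 (0 : ι → ι → ℕ) = 1 := by
  rw [typeCount, filter_true_of_mem]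
  · simp
  · intro s _
    ext i j
    simp [permType]

lemma betheCount_mul_edgeCoeff_le (hK : IsSemimagic (M + 1) K)
    (ih : ∀ K' : ι → ι → ℕ, IsSemimagic M K' → betheCount M K' ≤ typeCount M K') (σ : Perm ι) :
    betheCount (M + 1) K * ∏ i, edgeCoeff (typeDensity (M + 1) K i (σ i)) ≤
      headCount M K σ * ∏ i, ∏ j, edgeLoss (typeDensity (M + 1) K i j) := by
  have hL := (prod_edgeLoss_pos hK).le
  by_cases h : permIndicator σ ≤ K
  · obtain ⟨K', rfl⟩ := exists_add_of_le h
    rw [isSemimagic_permIndicator_add] at hK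
    rw [headCount_permIndicator_add, ← betheCount_mul_edgeLoss hK]
    exact mul_le_mul_of_nonneg_right (ih K' hK) hL
  · obtain ⟨i, hi⟩ : ∃ i, K i (σ i) = 0 := by simpa [permIndicator_le_iff] using h
    rw [prod_eq_zero (mem_univ i) (by simp [typeDensity, hi, edgeCoeff]), mul_zero]
    positivity

lemma betheCount_le_typeCount (hK : IsSemimagic M K) : betheCount M K ≤ typeCount M K := by
  induction M generalizing K with
  | zero =>
    obtain rfl : K = 0 := funext₂ fun i j => Nat.le_zero.1 (hK.le i j)
    simp [typeCount_zero, betheCount, betheFactor]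
  | succ M ih =>
    have hsum := sum_le_sum fun σ (_ : σ ∈ univ) =>
      betheCount_mul_edgeCoeff_le hK (fun _ hK' => ih hK') σ
    rw [← sum_mul, ← Nat.cast_sum, sum_headCount, ← mul_sum] at hsum
    refine le_of_mul_le_mul_right (le_trans ?_ hsum) (prod_edgeLoss_pos hK)
    exact mul_le_mul_of_nonneg_left (prod_edgeLoss_le_perm' hK.typeDensity_mem)
      (betheCount_pos _ _).le

end LowerBound

section UpperBound

lemma log_edgeCoeff {γ : ℝ} (h : γ ≠ 0) : log (edgeCoeff γ) = log γ + log (1 - γ) := by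
  unfold edgeCoeff
  split_ifs with h1
  · simp [h1]
  · exact log_mul h (sub_ne_zero.2 (Ne.symm h1))

lemma log_edgeLoss (γ : ℝ) : log (edgeLoss γ) = log (1 - γ) := by
  unfold edgeLoss
  split_ifs with h1
  · simp [h1]
  · rfl

lemma log_sum_eq_sum_negMulLog_add {Ω : Type*} [Fintype Ω] {x : Ω → ℝ} (hx : ∑ ω, x ω ≠ 0) :
    log (∑ ω, x ω) =
      ∑ ω, negMulLog (x ω / ∑ ω, x ω) + ∑ ω, x ω / (∑ ω, x ω) * log (x ω) := by
  set N := ∑ ω, x ω with hN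
  have hterm : ∀ ω, negMulLog (x ω / N) + x ω / N * log (x ω) = x ω / N * log N := fun ω => by
    by_cases h : x ω = 0
    · simp [h]
    · rw [negMulLog, log_div h hx]
      ring
  rw [← sum_add_distrib, sum_congr rfl fun ω _ => hterm ω, ← sum_mul, ← sum_div, ← hN,
    div_self hx, one_mul]

variable {ι : Type*} [Fintype ι]

lemma betheEntropy_eq (γ : ι → ι → ℝ) :
    betheEntropy γ =
      ∑ i, ∑ j, log (1 - γ i j) - ∑ i, ∑ j, γ i j * (log (γ i j) + log (1 - γ i j)) := by
  simp only [betheEntropy, ← sum_sub_distrib]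
  refine sum_congr rfl fun i _ => sum_congr rfl fun j _ => ?_
  rw [negMulLog, negMulLog]
  ring

variable [DecidableEq ι] {M : ℕ} {K : ι → ι → ℕ}

lemma typeCount_one_le (K : ι → ι → ℕ) : typeCount 1 K ≤ 1 := by
  refine card_le_one.2 fun s hs t ht => ?_
  have h0 : s 0 = t 0 := permIndicator_injective <| by
    rw [← permType_fin_one, ← permType_fin_one, (mem_filter.1 hs).2, (mem_filter.1 ht).2]
  ext1 m
  rwa [Subsingleton.elim m 0]

lemma log_betheCount_add {σ : Perm ι} (hK : IsSemimagic M K) :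
    log (betheCount M K) +
        ∑ i, ∑ j, log (1 - typeDensity (M + 1) (permIndicator σ + K) i j) =
      log (betheCount (M + 1) (permIndicator σ + K)) +
        ∑ i, (log (typeDensity (M + 1) (permIndicator σ + K) i (σ i)) +
          log (1 - typeDensity (M + 1) (permIndicator σ + K) i (σ i))) := by
  have hK' := (isSemimagic_permIndicator_add (σ := σ)).2 hK
  set γ := typeDensity (M + 1) (permIndicator σ + K) with hγ
  have hγσ : ∀ i, γ i (σ i) ≠ 0 := fun i => by
    have := permIndicator_le_iff.1 (le_self_add (a := permIndicator σ) (b := K)) i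
    rw [hγ, typeDensity]
    positivity
  have hL : ∀ i j, edgeLoss (γ i j) ≠ 0 := fun i j =>
    (edgeLoss_pos hK'.typeDensity_le_one).ne'
  have hL' : ∏ i, ∏ j, edgeLoss (γ i j) ≠ 0 := (prod_edgeLoss_pos hK').ne'
  have hC : ∏ i, edgeCoeff (γ i (σ i)) ≠ 0 := fun h =>
    mul_ne_zero (betheCount_pos M K).ne' hL' <| by rw [betheCount_mul_edgeLoss hK, h, mul_zero]
  have hlog := congrArg log (betheCount_mul_edgeLoss (σ := σ) hK)
  rw [log_mul (betheCount_pos _ _).ne' hL', log_mul (betheCount_pos _ _).ne' hC,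
    log_prod fun i hi => prod_ne_zero_iff.1 hC i hi,
    log_prod fun i hi => prod_ne_zero_iff.1 hL' i hi,
    sum_congr rfl fun i _ => log_prod fun j _ => hL i j] at hlog
  simpa only [log_edgeLoss, log_edgeCoeff (hγσ _)] using hlog

variable {C : ℝ}

lemma log_headCount_le (hC : 0 < C)
    (ih : ∀ K' : ι → ι → ℕ, IsSemimagic M K' → typeCount M K' ≤ C * betheCount M K')
    (hK : IsSemimagic (M + 1) K) {σ : Perm ι} (hσ : headCount M K σ ≠ 0) :
    log (headCount M K σ) ≤ log (C * betheCount (M + 1) K) -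
      ∑ i, ∑ j, log (1 - typeDensity (M + 1) K i j) +
      ∑ i, (log (typeDensity (M + 1) K i (σ i)) + log (1 - typeDensity (M + 1) K i (σ i))) := by
  obtain ⟨K', rfl⟩ := exists_add_of_le (permIndicator_le_of_headCount_ne_zero hσ)
  rw [isSemimagic_permIndicator_add] at hK
  rw [headCount_permIndicator_add] at hσ ⊢
  have hle := log_le_log (by positivity) (ih K' hK)
  rw [log_mul hC.ne' (betheCount_pos _ _).ne'] at hle ⊢
  linarith [log_betheCount_add (σ := σ) hK]

lemma marginal_headCount_div (h : typeCount (M + 1) K ≠ 0) :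
    marginal (fun σ => (headCount M K σ : ℝ) / typeCount (M + 1) K) = typeDensity (M + 1) K := by
  ext i j
  have hcount : ((M : ℝ) + 1) * ∑ σ with σ i = j, (headCount M K σ : ℝ) =
      typeCount (M + 1) K * K i j := by
    exact_mod_cast mul_sum_headCount_filter i j
  rw [marginal, ← sum_div, typeDensity]
  push_cast
  field_simp
  linarith

lemma log_typeCount_succ_le (hC : 0 < C)
    (ih : ∀ K' : ι → ι → ℕ, IsSemimagic M K' → typeCount M K' ≤ C * betheCount M K')
    (hK : IsSemimagic (M + 1) K) (hN : typeCount (M + 1) K ≠ 0) :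
    log (typeCount (M + 1) K) ≤
      log (C * betheCount (M + 1) K) + Fintype.card ι * (log 2 / 2) := by
  set γ := typeDensity (M + 1) K
  set μ : Perm ι → ℝ := fun σ => headCount M K σ / typeCount (M + 1) K with hμ_def
  have hμ : ∀ σ, 0 ≤ μ σ := fun σ => by positivity
  have hsum : ∑ σ, (headCount M K σ : ℝ) = typeCount (M + 1) K := by
    rw [← Nat.cast_sum, sum_headCount]
  have hN' : (typeCount (M + 1) K : ℝ) ≠ 0 := Nat.cast_ne_zero.2 hN
  have hμ1 : ∑ σ, μ σ = 1 := by rw [← sum_div, hsum, div_self hN']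
  have hentropy := sum_negMulLog_le_betheEntropy hμ hμ1
  rw [marginal_headCount_div hN, betheEntropy_eq] at hentropy
  set c := log (C * betheCount (M + 1) K) - ∑ i, ∑ j, log (1 - γ i j)
  have hhead : ∑ σ, μ σ * log (headCount M K σ) ≤
      c + ∑ i, ∑ j, γ i j * (log (γ i j) + log (1 - γ i j)) := by
    calc ∑ σ, μ σ * log (headCount M K σ)
        ≤ ∑ σ, μ σ * (c + ∑ i, (log (γ i (σ i)) + log (1 - γ i (σ i)))) :=
          sum_le_sum fun σ _ => by
            by_cases hσ : headCount M K σ = 0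
            · simp [hμ_def, hσ]
            · exact mul_le_mul_of_nonneg_left (log_headCount_le hC ih hK hσ) (hμ σ)
      _ = c + ∑ i, ∑ j, γ i j * (log (γ i j) + log (1 - γ i j)) := by
          simp only [mul_add (μ _), sum_add_distrib (s := (univ : Finset (Perm ι))),
            ← sum_mul, hμ1, one_mul]
          rw [sum_mul_sum_apply fun i j => log (γ i j) + log (1 - γ i j),
            marginal_headCount_div hN]
  have hchain := log_sum_eq_sum_negMulLog_add (x := fun σ => (headCount M K σ : ℝ))
    (by rwa [hsum])
  rw [hsum] at hchain
  linarith

lemma typeCount_succ_le (hC : 0 < C)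
    (ih : ∀ K' : ι → ι → ℕ, IsSemimagic M K' → typeCount M K' ≤ C * betheCount M K')
    (hK : IsSemimagic (M + 1) K) :
    typeCount (M + 1) K ≤ C * 2 ^ (Fintype.card ι / 2 : ℝ) * betheCount (M + 1) K := by
  have hB := betheCount_pos (M + 1) K
  by_cases hN : typeCount (M + 1) K = 0
  · rw [hN, Nat.cast_zero]
    positivity
  · rw [← log_le_log_iff (by positivity) (by positivity), mul_right_comm,
      log_mul (by positivity) (by positivity), log_rpow two_pos]
    exact (log_typeCount_succ_le hC ih hK hN).trans_eq (by ring)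

lemma typeCount_le (hK : IsSemimagic (M + 1) K) :
    typeCount (M + 1) K ≤ ((2 : ℝ) ^ (Fintype.card ι / 2 : ℝ)) ^ M * betheCount (M + 1) K := by
  induction M generalizing K with
  | zero => simpa [betheCount_one hK] using typeCount_one_le K
  | succ M ih =>
    rw [pow_succ]
    exact typeCount_succ_le (by positivity) (fun _ => ih) hK

end UpperBound

/-! ### Permanents of liftings -/

lemma prod_comp_eq_prod_pow_card {α β γ : Type*} [Fintype α] [Fintype γ] [DecidableEq γ]
    [CommMonoid β] (a : γ → β) (f : α → γ) : ∏ m, a (f m) = ∏ j, a j ^ #{m | f m = j} := by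
  rw [← prod_fiberwise' univ f]
  simp only [prod_const]

section Counting

variable {α γ : Type*} [Fintype α] [DecidableEq α] [Fintype γ] [DecidableEq γ]

lemma card_perm_comp_eq {f₀ f : α → γ} (h : ∀ c, #{a | f a = c} = #{a | f₀ a = c}) :
    #{g : Perm α | f₀ ∘ g = f} = ∏ c, (#{a | f₀ a = c}).factorial := by
  have e : ∀ c, Nonempty ({a // f a = c} ≃ {a // f₀ a = c}) := fun c =>
    Fintype.card_eq.1 (by rw [Fintype.card_subtype, Fintype.card_subtype, h])
  obtain ⟨g₀, rfl⟩ : ∃ g₀ : Perm α, f₀ ∘ g₀ = f :=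
    ⟨Equiv.ofFiberEquiv fun c => (e c).some, funext fun a => Equiv.ofFiberEquiv_map _ a⟩
  have hstab := DomMulAct.stabilizer_card f₀
  simp only [Fintype.card_subtype] at hstab
  rw [← hstab]
  refine card_equiv (Equiv.mulRight g₀⁻¹) fun g => ?_
  simp only [mem_filter_univ, Equiv.coe_mulRight, Equiv.Perm.coe_mul, ← Function.comp_assoc]
  rw [Equiv.Perm.inv_def, Equiv.comp_symm_eq]

lemma card_fun_card_fiber_mul {k : γ → ℕ} (hk : ∑ c, k c = Fintype.card α) :
    #{f : α → γ | ∀ c, #{a | f a = c} = k c} * ∏ c, (k c).factorial =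
      (Fintype.card α).factorial := by
  obtain ⟨e⟩ : Nonempty (α ≃ Σ c, Fin (k c)) := Fintype.card_eq.1 (by simp [hk])
  let f₀ : α → γ := fun a => (e a).1
  have hf₀ : ∀ c, #{a | f₀ a = c} = k c := fun c => by
    rw [← Fintype.card_subtype, Fintype.card_congr ((e.subtypeEquiv fun _ => Iff.rfl :
      {a // f₀ a = c} ≃ {p : Σ c, Fin (k c) // p.1 = c}).trans (Equiv.sigmaSubtype c)),
      Fintype.card_fin]
  have hfiber := card_eq_sum_card_fiberwise (f := fun g : Perm α => f₀ ∘ g) (s := univ)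
    (t := {f : α → γ | ∀ c, #{a | f a = c} = k c}) fun g _ => by
      simp only [coe_filter, mem_univ, true_and, Set.mem_ofPred_eq, ← hf₀, card_filter]
      exact fun c => Equiv.sum_comp g fun a => if f₀ a = c then 1 else 0
  rw [← Fintype.card_perm, ← card_univ, hfiber, sum_congr rfl fun f hf =>
    card_perm_comp_eq (f₀ := f₀) fun c => by rw [hf₀, (mem_filter.1 hf).2 c]]
  simp [hf₀]

lemma card_perm_eqOn {s : Finset α} {g : α → α} (hg : Set.InjOn g s) :
    #{ρ : Perm α | ∀ a ∈ s, ρ a = g a} = (Fintype.card α - #s).factorial := by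
  obtain ⟨e, he⟩ := exists_equiv_extend_of_card_eq (t := univ) (card_univ (α := α)).symm
    (subset_univ (s.image g)) hg
  let ρ₀ : Perm α := e.trans (Equiv.subtypeUnivEquiv mem_univ)
  have hρ₀ : ∀ a ∈ s, ρ₀ a = g a := he
  have hcard : Fintype.card (Perm {a // a ∉ s}) = (Fintype.card α - #s).factorial := by
    rw [Fintype.card_perm, Fintype.card_subtype_compl, Fintype.card_coe]
  rw [← hcard, Fintype.card_congr (Equiv.Perm.subtypeEquivSubtypePerm fun a => a ∉ s),
    Fintype.card_subtype]
  refine card_equiv (Equiv.mulLeft ρ₀⁻¹) fun ρ => ?_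
  simp only [mem_filter_univ, not_not, Equiv.coe_mulLeft, Equiv.Perm.mul_apply]
  refine forall₂_congr fun a ha => ?_
  rw [Equiv.Perm.inv_eq_iff_eq, hρ₀ a ha]

end Counting

section BlockCount

variable {ι κ : Type*} [DecidableEq ι] [Fintype κ]

/-- The number of elements of the `i`-th row block that `f` sends to `j`. The type of a permutation
`τ` of `ι × κ` is `blockCount (Prod.fst ∘ τ)`: its `(i, j)` entry counts the ones that the matrix
of `τ` has in the block `(i, j)`. -/
def blockCount (f : ι × κ → ι) (i j : ι) : ℕ :=
  #{m | f (i, m) = j}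

variable [Fintype ι]

lemma card_filter_fst_eq (j : ι) : #{p : ι × κ | p.1 = j} = Fintype.card κ := by
  rw [card_filter, Fintype.sum_prod_type, sum_comm]
  simp

lemma sum_blockCount (f : ι × κ → ι) (j : ι) : ∑ i, blockCount f i j = #{p | f p = j} := by
  simp only [blockCount, card_filter, Fintype.sum_prod_type]

lemma isSemimagic_blockCount (τ : Perm (ι × κ)) :
    IsSemimagic (Fintype.card κ) (blockCount (Prod.fst ∘ τ)) := by
  refine ⟨fun i => ?_, fun j => ?_⟩
  · simp only [blockCount]
    rw [← card_eq_sum_card_fiberwise fun _ _ => mem_coe.2 (mem_univ _), card_univ]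
  · rw [sum_blockCount, ← card_filter_fst_eq j, card_filter, card_filter]
    exact Equiv.sum_comp τ fun p => if p.1 = j then 1 else 0

variable [DecidableEq κ] {K : ι → ι → ℕ}

lemma card_blockCount_mul (hK : ∀ i, ∑ j, K i j = Fintype.card κ) :
    #{f : ι × κ → ι | blockCount f = K} * ∏ i, ∏ j, (K i j).factorial =
      (Fintype.card κ).factorial ^ Fintype.card ι := by
  have hcurry : #{f : ι × κ → ι | blockCount f = K} =
      ∏ i, #{h : κ → ι | ∀ j, #{m | h m = j} = K i j} := by
    rw [← Fintype.card_piFinset]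
    refine card_equiv (Equiv.curry ι κ ι) fun f => ?_
    simp only [mem_filter_univ, funext_iff, Fintype.mem_piFinset]
    rfl
  rw [hcurry, ← prod_mul_distrib, prod_congr rfl fun i _ => card_fun_card_fiber_mul (hK i),
    prod_const, card_univ]

lemma card_perm_fst_comp_eq {f : ι × κ → ι} (hf : ∀ j, ∑ i, blockCount f i j = Fintype.card κ) :
    #{τ : Perm (ι × κ) | Prod.fst ∘ τ = f} =
      (Fintype.card κ).factorial ^ Fintype.card ι := by
  rw [card_perm_comp_eq fun j => by rw [← sum_blockCount, hf, card_filter_fst_eq]]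
  simp only [card_filter_fst_eq, prod_const, card_univ]

lemma card_perm_blockCount_mul (hK : IsSemimagic (Fintype.card κ) K) :
    #{τ : Perm (ι × κ) | blockCount (Prod.fst ∘ τ) = K} * ∏ i, ∏ j, (K i j).factorial =
      ((Fintype.card κ).factorial ^ Fintype.card ι) ^ 2 := by
  have hfiber : #{τ : Perm (ι × κ) | blockCount (Prod.fst ∘ τ) = K} =
      #{f : ι × κ → ι | blockCount f = K} * (Fintype.card κ).factorial ^ Fintype.card ι := by
    rw [card_eq_sum_card_fiberwise (f := fun τ : Perm (ι × κ) => Prod.fst ∘ τ)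
      (t := {f | blockCount f = K}) fun τ hτ => by simpa using hτ]
    refine sum_const_nat fun f hf => ?_
    obtain rfl := (mem_filter.1 hf).2
    rw [← card_perm_fst_comp_eq hK.2, filter_filter]
    exact congrArg card (filter_congr fun τ _ => and_iff_right_of_imp fun h => by rw [h])
  rw [hfiber, mul_right_comm, card_blockCount_mul hK.1, sq]

lemma card_lifting_apply_eq (τ : Perm (ι × κ)) :
    #{P : ι → ι → Perm κ | ∀ i m, P i (τ (i, m)).1 m = (τ (i, m)).2} =
      ∏ i, ∏ j, (Fintype.card κ - blockCount (Prod.fst ∘ τ) i j).factorial := by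
  have hblock : ∀ i j, #{ρ : Perm κ | ∀ m ∈ ({m | (τ (i, m)).1 = j} : Finset κ),
      ρ m = (τ (i, m)).2} = (Fintype.card κ - blockCount (Prod.fst ∘ τ) i j).factorial :=
    fun i j => card_perm_eqOn fun m hm m' hm' h => by
      simp only [coe_filter, mem_univ, true_and, Set.mem_ofPred_eq] at hm hm'
      simpa using τ.injective (Prod.ext (hm.trans hm'.symm) h)
  simp only [← hblock, ← Fintype.card_piFinset]
  congr 1
  ext P
  simp only [mem_filter_univ, Fintype.mem_piFinset]
  exact ⟨fun h i j m hm => hm ▸ h i m, fun h i m => h i _ m rfl⟩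

end BlockCount

section Expansion

variable {n M : ℕ} {θ : Matrix (Fin n) (Fin n) ℝ}

lemma prod_liftMat (P : Fin n → Fin n → Perm (Fin M)) (τ : Perm (Fin n × Fin M)) :
    ∏ p, liftMat θ P p (τ p) = (∏ i, ∏ j, θ i j ^ blockCount (Prod.fst ∘ τ) i j) *
      if ∀ i m, P i (τ (i, m)).1 m = (τ (i, m)).2 then 1 else 0 := by
  simp only [liftMat, Matrix.of_apply]
  rw [prod_mul_distrib, Fintype.prod_prod_type, prod_ite_zero, prod_const_one,
    prod_congr rfl fun i _ => prod_comp_eq_prod_pow_card (θ i) fun m => (τ (i, m)).1]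
  simp [blockCount]

lemma sum_perm'_liftMat :
    ∑ P : Fin n → Fin n → Perm (Fin M), perm' (liftMat θ P) =
      ∑ τ : Perm (Fin n × Fin M), ∏ i, ∏ j,
        ((M - blockCount (Prod.fst ∘ τ) i j).factorial *
          θ i j ^ blockCount (Prod.fst ∘ τ) i j : ℝ) := by
  simp only [perm']
  rw [sum_comm]
  refine sum_congr rfl fun τ _ => ?_
  have hcard : #{P : Fin n → Fin n → Perm (Fin M) | ∀ i m, P i (τ (i, m)).1 m = (τ (i, m)).2} =
      ∏ i, ∏ j, (M - blockCount (Prod.fst ∘ τ) i j).factorial := by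
    convert card_lifting_apply_eq τ
    rw [Fintype.card_fin]
  simp only [prod_liftMat, ← mul_sum, sum_boole, hcard, Nat.cast_prod, prod_mul_distrib]
  rw [mul_comm]

instance : DecidablePred (IsSemimagic (ι := Fin n) M) := fun _ =>
  inferInstanceAs (Decidable (_ ∧ _))

/-- The finite set of the types that occur in the expansions of both permanents. -/
def semimagicMatrices (n M : ℕ) : Finset (Fin n → Fin n → ℕ) :=
  {K ∈ Fintype.piFinset fun _ => Fintype.piFinset fun _ => range (M + 1) | IsSemimagic M K}

lemma mem_semimagicMatrices {K : Fin n → Fin n → ℕ} :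
    K ∈ semimagicMatrices n M ↔ IsSemimagic M K := by
  simp only [semimagicMatrices, mem_filter, Fintype.mem_piFinset, mem_range,
    and_iff_right_iff_imp]
  exact fun h i j => Nat.lt_succ_of_le (h.le i j)

lemma perm'_pow_eq (M : ℕ) (θ : Matrix (Fin n) (Fin n) ℝ) :
    perm' θ ^ M = ∑ K ∈ semimagicMatrices n M, typeCount M K * ∏ i, ∏ j, θ i j ^ K i j := by
  have hprod : ∀ s : Fin M → Perm (Fin n),
      ∏ m, ∏ i, θ i (s m i) = ∏ i, ∏ j, θ i j ^ permType s i j := fun s => by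
    rw [prod_comm]
    exact prod_congr rfl fun i _ => prod_comp_eq_prod_pow_card (θ i) fun m => s m i
  rw [perm', Fintype.sum_pow, ← sum_fiberwise_of_maps_to (g := permType)
    (t := semimagicMatrices n M) fun s _ =>
      mem_semimagicMatrices.2 (by simpa using isSemimagic_permType s)]
  refine sum_congr rfl fun K _ => ?_
  rw [sum_congr rfl fun s hs => by rw [hprod s, (mem_filter.1 hs).2], sum_const, nsmul_eq_mul,
    typeCount]

lemma avgLiftPerm_eq (M : ℕ) (θ : Matrix (Fin n) (Fin n) ℝ) :
    avgLiftPerm n M θ =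
      ∑ K ∈ semimagicMatrices n M, betheCount M K * ∏ i, ∏ j, θ i j ^ K i j := by
  rw [avgLiftPerm, sum_perm'_liftMat, ← sum_fiberwise_of_maps_to
    (g := fun τ : Perm (Fin n × Fin M) => blockCount (Prod.fst ∘ τ)) (t := semimagicMatrices n M)
    fun τ _ => mem_semimagicMatrices.2 (by simpa using isSemimagic_blockCount τ), sum_div]
  refine sum_congr rfl fun K hK => ?_
  rw [sum_congr rfl fun τ hτ => by rw [(mem_filter.1 hτ).2], sum_const, nsmul_eq_mul]
  have hcount := congrArg (Nat.cast : ℕ → ℝ) <| card_perm_blockCount_mul (κ := Fin M)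
    (by simpa using mem_semimagicMatrices.1 hK)
  simp only [Fintype.card_fin] at hcount
  push_cast at hcount
  have hK0 : ∏ i, ∏ j, ((K i j).factorial : ℝ) ≠ 0 := by positivity
  rw [← eq_div_iff hK0] at hcount
  simp only [betheCount, betheFactor, prod_mul_distrib, prod_div_distrib, hcount,
    Fintype.card_pi, Fintype.card_perm, Fintype.card_fin, prod_const, card_univ]
  push_cast
  field_simp
  ring

lemma avgLiftPerm_le_perm'_pow (hθ : ∀ i j, 0 ≤ θ i j) : avgLiftPerm n M θ ≤ perm' θ ^ M := by
  rw [avgLiftPerm_eq, perm'_pow_eq]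
  exact sum_le_sum fun K hK => mul_le_mul_of_nonneg_right
    (betheCount_le_typeCount (mem_semimagicMatrices.1 hK))
    (prod_nonneg fun i _ => prod_nonneg fun j _ => pow_nonneg (hθ i j) _)

lemma perm'_pow_succ_le (hθ : ∀ i j, 0 ≤ θ i j) :
    perm' θ ^ (M + 1) ≤ ((2 : ℝ) ^ (n / 2 : ℝ)) ^ M * avgLiftPerm n (M + 1) θ := by
  rw [avgLiftPerm_eq, perm'_pow_eq, mul_sum]
  simp only [← mul_assoc]
  refine sum_le_sum fun K hK => mul_le_mul_of_nonneg_right ?_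
    (prod_nonneg fun i _ => prod_nonneg fun j _ => pow_nonneg (hθ i j) _)
  simpa only [Fintype.card_fin] using typeCount_le (mem_semimagicMatrices.1 hK)

lemma perm'_pos (hθ : ∀ i j, 0 ≤ θ i j) (hex : ∃ σ : Perm (Fin n), 0 < ∏ i, θ i (σ i)) :
    0 < perm' θ := by
  obtain ⟨σ, hσ⟩ := hex
  exact sum_pos' (fun τ _ => prod_nonneg fun i _ => hθ i (τ i)) ⟨σ, mem_univ σ, hσ⟩

lemma one_le_div_rpow_inv {p a : ℝ} (hM : M ≠ 0) (hp : 0 ≤ p) (ha : 0 < a) (h : a ≤ p ^ M) :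
    1 ≤ p / a ^ (1 / (M : ℝ)) := by
  rw [one_le_div (rpow_pos_of_pos ha _), one_div]
  exact (rpow_inv_le_iff_of_pos ha.le hp (by positivity)).2 (by rwa [rpow_natCast])

lemma div_rpow_inv_le {p a c : ℝ} (hM : M ≠ 0) (hp : 0 ≤ p) (ha : 0 < a) (hc : 0 ≤ c)
    (h : p ^ M ≤ c * a) : p / a ^ (1 / (M : ℝ)) ≤ c ^ (1 / (M : ℝ)) := by
  rw [div_le_iff₀ (rpow_pos_of_pos ha _), ← mul_rpow hc ha.le, one_div]
  exact (le_rpow_inv_iff_of_pos hp (by positivity) (by positivity)).2 (by rwa [rpow_natCast])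

end Expansion

end BethePermanent

/-- For `n, M ≥ 1` and a nonnegative `n×n` matrix `θ` with
`∏_i θ(i,σ(i)) > 0` for at least one permutation `σ`:
`⟨perm(θ↑P_M)⟩ ≤ perm(θ)^M ≤ 2^{n(M−1)/2} · ⟨perm(θ↑P_M)⟩`; equivalently, the degree-`M`
Bethe permanent `perm_{B,M}(θ) = ⟨perm(θ↑P_M)⟩^{1/M}` satisfies
`1 ≤ perm(θ)/perm_{B,M}(θ) ≤ (2^{n/2})^{(M−1)/M}`. -/
theorem statement_5 (n M : ℕ) (hn : 1 ≤ n) (hM : 1 ≤ M)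
    (θ : Matrix (Fin n) (Fin n) ℝ) (hθ : ∀ i j, 0 ≤ θ i j)
    (hex : ∃ σ : Equiv.Perm (Fin n), 0 < ∏ i, θ i (σ i)) :
    (avgLiftPerm n M θ ≤ perm' θ ^ M ∧
      perm' θ ^ M ≤ (2 : ℝ) ^ (((n : ℝ) * ((M : ℝ) - 1)) / 2) * avgLiftPerm n M θ) ∧
    (1 ≤ perm' θ / (avgLiftPerm n M θ) ^ (1 / (M : ℝ)) ∧
      perm' θ / (avgLiftPerm n M θ) ^ (1 / (M : ℝ)) ≤
        ((2 : ℝ) ^ ((n : ℝ) / 2)) ^ (((M : ℝ) - 1) / (M : ℝ))) := by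
  obtain ⟨N, rfl⟩ : ∃ N, M = N + 1 := ⟨M - 1, (Nat.sub_add_cancel hM).symm⟩
  have hlower := BethePermanent.avgLiftPerm_le_perm'_pow (M := N + 1) hθ
  have hupper := BethePermanent.perm'_pow_succ_le (M := N) hθ
  have hperm := BethePermanent.perm'_pos hθ hex
  have havg : 0 < avgLiftPerm n (N + 1) θ :=
    pos_of_mul_pos_right ((pow_pos hperm _).trans_le hupper) (by positivity)
  have hN : ((N + 1 : ℕ) : ℝ) - 1 = N := by
    push_cast
    ring
  refine ⟨⟨hlower, ?_⟩, ?_, ?_⟩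
  · rwa [hN, mul_div_right_comm, Real.rpow_mul_natCast two_pos.le]
  · exact BethePermanent.one_le_div_rpow_inv N.succ_ne_zero hperm.le havg hlower
  · rw [hN, div_eq_mul_one_div (N : ℝ), Real.rpow_mul (by positivity), Real.rpow_natCast]
    exact BethePermanent.div_rpow_inv_le N.succ_ne_zero hperm.le havg (by positivity) hupper
end
end

section
/- Let n, M ≥ 1 be integers and let θ be an n×n matrix with nonnegative real entries such that ∏_{i} θ(i,σ(i)) > 0 for at least one permutation σ ∈ S_n. Then (M^M/M!)^n · (n!/n^n)^{M−1} · perm(θ ⊗ U_{M,M}) ≤ perm(θ)^M ≤ (M^M/M!)^n · perm(θ ⊗ U_{M,M}); equivalently, the degree-M scaled Sinkhorn permanent perm_{scS,M}(θ) = perm(θ ⊗ U_{M,M})^{1/M} satisfies (M^n/(M!)^{n/M}) · (n!/n^n)^{(M−1)/M} ≤ perm(θ)/perm_{scS,M}(θ) ≤ M^n/(M!)^{n/M}. -/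
open scoped BigOperators

noncomputable section

/- Let `|ι| = n` and `|κ| = M`. A permutation of `ι × κ`, followed by the first projection, is a
family of `M` self-maps of `ι` that takes each value `M` times in total. Conversely each such
balanced family arises from `M! ^ n` permutations, so `perm (θ ⊗ U)` is, up to normalization, the
sum `B_M` of the weights of the balanced families. Families of permutations are balanced, whence
`perm θ ^ M ≤ B_M`.

For the other inequality, count pairs of a balanced family `f` of `M + 1` maps and a choice
function `s` whose transversal `i ↦ f (s i) i` is a permutation. Swapping entries within each column
moves the transversal to the first map of `f`, so each `s` contributes `perm θ * B_M`. A fixed `f`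
has as many good `s` as the permanent of its count matrix, which is `M + 1` times a doubly
stochastic matrix, so van der Waerden's inequality gives `n! / n ^ n * B_{M + 1} ≤ perm θ * B_M`.

Van der Waerden's inequality follows Gurvits: the product of the row forms of a positive doubly
stochastic matrix is at least `∏ x_j` and has no zeros in the right half-space. Both properties
survive differentiation in one variable at zero, the first up to a factor `(d / (d + 1)) ^ d`, and
differentiating in all the variables leaves the permanent. -/

section Univariate

open Polynomial

theorem multiset_prod_le_sum_div_card_pow {s : Multiset ℝ} (hs : ∀ x ∈ s, 0 ≤ x) :
    s.prod ≤ (s.sum / s.card) ^ s.card := by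
  rcases s.empty_or_exists_mem with rfl | ⟨a, ha⟩
  · simp
  have hcard : 0 < s.card := Multiset.card_pos_iff_exists_mem.2 ⟨a, ha⟩
  have hpos : 0 < (s.card : ℝ) := by exact_mod_cast hcard
  have hmem (x : s) : 0 ≤ (x : ℝ) := hs _ (Multiset.coe_mem)
  have hamgm := Real.geom_mean_le_arith_mean Finset.univ (fun _ : s => 1) (fun x => (x : ℝ))
    (fun _ _ => zero_le_one) (by simpa using hpos) fun x _ => hmem x
  simp only [Real.rpow_one, Finset.sum_const, Finset.card_univ, Multiset.card_coe, nsmul_eq_mul,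
    mul_one, one_mul, ← Multiset.prod_eq_prod_coe, ← Multiset.sum_eq_sum_coe] at hamgm
  rwa [Real.rpow_inv_le_iff_of_pos (Multiset.prod_nonneg hs)
    (div_nonneg (Multiset.sum_nonneg hs) hpos.le) hpos, Real.rpow_natCast] at hamgm

theorem coeff_one_div_coeff_zero_of_splits {K : Type*} [Field K] {P : K[X]} (hP : P.Splits)
    (h0 : P.coeff 0 ≠ 0) : P.coeff 1 / P.coeff 0 = (P.roots.map fun r => (-r)⁻¹).sum := by
  have := hP.eval_derivative_div_eval_of_ne_zero (coeff_zero_eq_eval_zero P ▸ h0)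
  simpa [← coeff_zero_eq_eval_zero, coeff_derivative] using this

theorem eval_le_of_splits_of_roots_neg {P : ℝ[X]} (hP : P.Splits) (hroots : ∀ r ∈ P.roots, r < 0)
    (h0 : 0 < P.coeff 0) (hdeg : P.natDegree ≠ 0) {t : ℝ} (ht : 0 ≤ t) :
    P.eval t ≤ P.coeff 0 * (1 + t * (P.coeff 1 / P.coeff 0) / P.natDegree) ^ P.natDegree := by
  have hprod : P.eval t = P.coeff 0 * (P.roots.map fun r => 1 + t * (-r)⁻¹).prod := by
    have hfactor : ∀ r ∈ P.roots, t - r = (0 - r) * (1 + t * (-r)⁻¹) := fun r hr => by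
      field_simp [(hroots r hr).ne]
      ring
    rw [coeff_zero_eq_eval_zero, hP.eval_eq_prod_roots, hP.eval_eq_prod_roots 0,
      Multiset.map_congr rfl hfactor, Multiset.prod_map_mul, mul_assoc]
  have hmean : (P.roots.map fun r => 1 + t * (-r)⁻¹).sum / P.natDegree =
      1 + t * (P.coeff 1 / P.coeff 0) / P.natDegree := by
    have hne : (P.natDegree : ℝ) ≠ 0 := by exact_mod_cast hdeg
    rw [coeff_one_div_coeff_zero_of_splits hP h0.ne', Multiset.sum_map_add,
      Multiset.sum_map_mul_left, Multiset.map_const', Multiset.sum_replicate, nsmul_one,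
      ← hP.natDegree_eq_card_roots, add_div, div_self hne]
  have hnonneg : ∀ x ∈ P.roots.map fun r => 1 + t * (-r)⁻¹, 0 ≤ x := by
    simp only [Multiset.mem_map, forall_exists_index, and_imp]
    rintro _ r hr rfl
    have : 0 < (-r)⁻¹ := inv_pos.2 (neg_pos.2 (hroots r hr))
    positivity
  have hamgm := multiset_prod_le_sum_div_card_pow hnonneg
  rw [Multiset.card_map, ← hP.natDegree_eq_card_roots, hmean] at hamgm
  exact hprod ▸ mul_le_mul_of_nonneg_left hamgm h0.le

theorem coeff_zero_pos_of_roots_neg {P : ℝ[X]} (hroots : ∀ r ∈ P.roots, r < 0)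
    (h : ∀ t, 0 < t → 0 < P.eval t) : 0 < P.coeff 0 := by
  have hne : P.eval 0 ≠ 0 := fun h0 => by
    have hP : P ≠ 0 := by
      rintro rfl
      simpa using h 1 one_pos
    exact lt_irrefl 0 (hroots 0 ((mem_roots hP).2 h0))
  have hlim : Filter.Tendsto (fun t => P.eval t) (nhdsWithin 0 (Set.Ioi 0)) (nhds (P.eval 0)) :=
    P.continuous.continuousWithinAt
  have hnonneg : 0 ≤ P.eval 0 :=
    ge_of_tendsto hlim (eventually_mem_nhdsWithin.mono fun t ht => (h t ht).le)
  exact coeff_zero_eq_eval_zero P ▸ hnonneg.lt_of_ne' hne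

theorem coeff_one_div_coeff_zero_nonneg {P : ℝ[X]} (hP : P.Splits) (hroots : ∀ r ∈ P.roots, r < 0)
    (h0 : P.coeff 0 ≠ 0) : 0 ≤ P.coeff 1 / P.coeff 0 := by
  rw [coeff_one_div_coeff_zero_of_splits hP h0]
  refine Multiset.sum_nonneg fun x hx => ?_
  obtain ⟨r, hr, rfl⟩ := Multiset.mem_map.1 hx
  exact inv_nonneg.2 (neg_nonneg.2 (hroots r hr).le)

theorem mul_pow_le_coeff_one {P : ℝ[X]} {d : ℕ} (hP : P.Splits) (hroots : ∀ r ∈ P.roots, r < 0)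
    (hd : d ≠ 0) (hdeg : P.natDegree = d + 1) {c : ℝ} (hc : 0 < c)
    (h : ∀ t, 0 < t → c * t ≤ P.eval t) : c * (d / (d + 1)) ^ d ≤ P.coeff 1 := by
  have h0 : 0 < P.coeff 0 :=
    coeff_zero_pos_of_roots_neg hroots fun t ht => (mul_pos hc ht).trans_le (h t ht)
  have hd' : (0 : ℝ) < d := by exact_mod_cast Nat.pos_of_ne_zero hd
  set s := P.coeff 1 / P.coeff 0
  have hbound {t : ℝ} (ht : 0 < t) : c * t ≤ P.coeff 0 * (1 + t * s / (d + 1)) ^ (d + 1) := by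
    have := (h t ht).trans
      (eval_le_of_splits_of_roots_neg hP hroots h0 (hdeg ▸ d.succ_ne_zero) ht.le)
    rwa [hdeg, Nat.cast_succ] at this
  have hs_ne : s ≠ 0 := fun hs0 => by
    have := hbound (t := 2 * P.coeff 0 / c) (by positivity)
    rw [hs0, mul_div_cancel₀ _ hc.ne'] at this
    norm_num at this
    linarith
  have hs_pos : 0 < s :=
    (coeff_one_div_coeff_zero_nonneg hP hroots h0.ne').lt_of_ne' hs_ne
  -- This value of `t` minimizes the upper bound on `c` provided by `hbound`.
  have hopt := hbound (t := (d + 1) / (d * s)) (by positivity)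
  have hbase : 1 + (d + 1) / (d * s) * s / (d + 1) = ((d + 1 : ℝ) / d) := by
    field_simp
  rw [hbase] at hopt
  calc c * (d / (d + 1) : ℝ) ^ d
      = c * ((d + 1) / (d * s)) * (d / (d + 1)) ^ (d + 1) * s := by
        rw [pow_succ]
        field_simp
    _ ≤ P.coeff 0 * ((d + 1) / d) ^ (d + 1) * (d / (d + 1)) ^ (d + 1) * s := by gcongr
    _ = P.coeff 0 * s := by
        rw [mul_assoc (P.coeff 0), ← mul_pow, div_mul_div_cancel₀ hd'.ne',
          div_self (by positivity), one_pow, mul_one]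
    _ = P.coeff 1 := mul_div_cancel₀ _ h0.ne'

end Univariate

section Slice

open MvPolynomial

theorem aeval_smul_of_isHomogeneous {σ R S : Type*} [CommSemiring R] [CommSemiring S] [Algebra R S]
    {p : MvPolynomial σ R} {d : ℕ} (hp : p.IsHomogeneous d) (c : S) (x : σ → S) :
    aeval (c • x) p = c ^ d * aeval x p := by
  simp only [aeval_def, eval₂_eq, Finset.mul_sum]
  refine Finset.sum_congr rfl fun m hm => ?_
  have hdeg : c ^ d = ∏ i ∈ m.support, c ^ m i := by
    rw [Finset.prod_pow_eq_pow_sum, ← hp.degree_eq_sum_deg_support hm]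
  simp only [Pi.smul_apply, smul_eq_mul, mul_pow, Finset.prod_mul_distrib, hdeg]
  ring

variable {n : ℕ} {R S : Type*} [CommSemiring R] [CommSemiring S] [Algebra R S]

/-- The univariate polynomial obtained from `p` by substituting `x` for all variables except the
zeroth one. The values `x` may lie in an extension `S` of the coefficient ring. -/
def slice (p : MvPolynomial (Fin (n + 1)) R) (x : Fin n → S) : Polynomial S :=
  Polynomial.mapAlgHom (aeval x) (finSuccEquiv R n p)

theorem coeff_slice (p : MvPolynomial (Fin (n + 1)) R) (x : Fin n → S) (k : ℕ) :
    (slice p x).coeff k = aeval x ((finSuccEquiv R n p).coeff k) :=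
  Polynomial.coeff_map _ _

theorem eval_slice (p : MvPolynomial (Fin (n + 1)) R) (x : Fin n → S) (t : S) :
    (slice p x).eval t = aeval (Fin.cons t x : Fin (n + 1) → S) p := by
  suffices ((Polynomial.aeval t).restrictScalars R).comp
      ((Polynomial.mapAlgHom (aeval x)).comp (finSuccEquiv R n).toAlgHom) =
        (aeval (Fin.cons t x : Fin (n + 1) → S) : MvPolynomial (Fin (n + 1)) R →ₐ[R] S) from
    DFunLike.congr_fun this p
  refine algHom_ext fun i => ?_
  refine Fin.cases ?_ (fun j => ?_) i <;> simp [finSuccEquiv_X_zero, finSuccEquiv_X_succ]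

theorem map_slice {T : Type*} [CommSemiring T] [Algebra R T] [Algebra S T] [IsScalarTower R S T]
    (p : MvPolynomial (Fin (n + 1)) R) (x : Fin n → S) :
    (slice p x).map (algebraMap S T) = slice p (algebraMap S T ∘ x) := by
  ext k
  rw [Polynomial.coeff_map, coeff_slice, coeff_slice, aeval_algebraMap_apply]

variable {p : MvPolynomial (Fin (n + 1)) R} {d : ℕ}

theorem natDegree_slice_le (hp : p.IsHomogeneous d) (x : Fin n → S) :
    (slice p x).natDegree ≤ d := by
  refine Polynomial.natDegree_map_le.trans ?_
  rw [natDegree_finSuccEquiv]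
  exact (degreeOf_le_totalDegree p 0).trans hp.totalDegree_le

theorem coeff_slice_zero_of_lt (hp : p.IsHomogeneous d) {k : ℕ} (hk : k < d) :
    (slice p (0 : Fin n → S)).coeff k = 0 := by
  have hhom := hp.finSuccEquiv_coeff_isHomogeneous k (d - k) (Nat.add_sub_cancel' hk.le)
  rw [coeff_slice, aeval_zero, constantCoeff_eq,
    hhom.coeff_eq_zero (by simpa using (Nat.sub_pos_of_lt hk).ne), map_zero]

theorem coeff_slice_of_isHomogeneous (hp : p.IsHomogeneous d) (x : Fin n → S) :
    (slice p x).coeff d = aeval (Fin.cons 1 0 : Fin (n + 1) → S) p := by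
  have hconst (y : Fin n → S) : (slice p x).coeff d = (slice p y).coeff d := by
    have hhom := hp.finSuccEquiv_coeff_isHomogeneous d 0 (add_zero d)
    rw [coeff_slice, coeff_slice, totalDegree_eq_zero_iff_eq_C.1
      ((totalDegree_zero_iff_isHomogeneous _).2 hhom), aeval_C, aeval_C]
  rw [← eval_slice, Polynomial.eval_eq_sum_range' (Nat.lt_succ_of_le (natDegree_slice_le hp 0)),
    Finset.sum_range_succ, Finset.sum_eq_zero fun k hk => by
      rw [coeff_slice_zero_of_lt hp (Finset.mem_range.1 hk), zero_mul],
    hconst 0, one_pow, mul_one, zero_add]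

theorem natDegree_slice (hp : p.IsHomogeneous d)
    (h : aeval (Fin.cons 1 0 : Fin (n + 1) → S) p ≠ 0) (x : Fin n → S) :
    (slice p x).natDegree = d :=
  (natDegree_slice_le hp x).antisymm <|
    Polynomial.le_natDegree_of_ne_zero (coeff_slice_of_isHomogeneous hp x ▸ h)

end Slice

section Stable

open MvPolynomial

/-- A real polynomial is strictly H-stable if it has no complex zero whose coordinates all have
nonnegative real part, at least one of them positive. Unlike H-stability, which only excludes zeros
whose coordinates all have positive real part, this passes to `∂p/∂x₀` at `x₀ = 0` without a
limiting argument. -/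
def IsStrictlyHStable {σ : Type*} (p : MvPolynomial σ ℝ) : Prop :=
  ∀ z : σ → ℂ, (∀ i, 0 ≤ (z i).re) → (∃ i, 0 < (z i).re) → aeval z p ≠ 0

namespace IsStrictlyHStable

theorem aeval_ne_zero {σ : Type*} {p : MvPolynomial σ ℝ} (hp : IsStrictlyHStable p) {x : σ → ℝ}
    (hx : ∀ i, 0 ≤ x i) (hpos : ∃ i, 0 < x i) : aeval x p ≠ 0 := fun h =>
  hp (algebraMap ℝ ℂ ∘ x) hx hpos (by rw [aeval_algebraMap_apply, h, map_zero])

variable {n d : ℕ} {p : MvPolynomial (Fin (n + 1)) ℝ}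

theorem slice_eval_ne_zero (hp : IsStrictlyHStable p) {z : Fin n → ℂ} (hz : ∀ i, 0 ≤ (z i).re)
    (hpos : ∃ i, 0 < (z i).re) {w : ℂ} (hw : 0 ≤ w.re) : (slice p z).eval w ≠ 0 := by
  rw [eval_slice]
  refine hp _ (Fin.cases hw hz) ?_
  obtain ⟨i, hi⟩ := hpos
  exact ⟨i.succ, hi⟩

theorem coeff_one_finSuccEquiv (hp : IsStrictlyHStable p) (hhom : p.IsHomogeneous d) (hd : d ≠ 0) :
    IsStrictlyHStable ((finSuccEquiv ℝ n p).coeff 1) := by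
  intro z hz hpos
  have hlead : aeval (Fin.cons 1 0 : Fin (n + 1) → ℂ) p ≠ 0 :=
    hp _ (Fin.cases zero_le_one fun _ => le_rfl) ⟨0, zero_lt_one⟩
  have hdeg : 0 < (slice p z).natDegree := natDegree_slice hhom hlead z ▸ Nat.pos_of_ne_zero hd
  have hroots : (slice p z).rootSet ℂ ⊆ {w | w.re < 0} := fun w hw => by
    by_contra! hw_re
    refine hp.slice_eval_ne_zero hz hpos (not_lt.1 hw_re) ?_
    simpa using (Polynomial.mem_rootSet.1 hw).2
  intro hzero
  have hzero_root : (0 : ℂ) ∈ (slice p z).derivative.rootSet ℂ := by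
    refine Polynomial.mem_rootSet.2 ⟨fun h => ?_, ?_⟩
    · exact hdeg.ne' (Polynomial.derivative_eq_zero.1 h)
    · simpa [← Polynomial.coeff_zero_eq_eval_zero, Polynomial.coeff_derivative, coeff_slice]
  have hmem := convexHull_min hroots (convex_halfSpace_re_lt 0)
    (Polynomial.rootSet_derivative_subset_convexHull_rootSet
      (Polynomial.natDegree_pos_iff_degree_pos.1 hdeg) hzero_root)
  simp at hmem

variable {x : Fin n → ℝ}

theorem slice_root_im_eq_zero (hp : IsStrictlyHStable p) (hhom : p.IsHomogeneous d)
    (hx : ∀ i, 0 ≤ x i) (hpos : ∃ i, 0 < x i) {w : ℂ}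
    (hw : (slice p (algebraMap ℝ ℂ ∘ x)).eval w = 0) : w.im = 0 := by
  by_contra him
  -- Multiplication by `c` moves `w` to the imaginary axis and keeps the real parts of `x`.
  set c : ℂ := ⟨1, w.re / w.im⟩ with hc
  rw [eval_slice] at hw
  refine hp (c • Fin.cons w (algebraMap ℝ ℂ ∘ x)) (fun i => ?_) ?_ ?_
  · refine Fin.cases ?_ (fun j => ?_) i
    · simp [hc, div_mul_cancel₀ _ him]
    · simpa [hc] using hx j
  · obtain ⟨i, hi⟩ := hpos
    exact ⟨i.succ, by simpa [hc] using hi⟩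
  · rw [aeval_smul_of_isHomogeneous hhom, hw, mul_zero]

theorem slice_splits (hp : IsStrictlyHStable p) (hhom : p.IsHomogeneous d)
    (hx : ∀ i, 0 ≤ x i) (hpos : ∃ i, 0 < x i) : (slice p x).Splits := by
  refine (IsAlgClosed.splits _).of_splits_map (algebraMap ℝ ℂ) fun w hw => ?_
  rw [map_slice, Polynomial.mem_roots'] at hw
  exact ⟨w.re, Complex.ext rfl (hp.slice_root_im_eq_zero hhom hx hpos hw.2).symm⟩

theorem slice_roots_neg (hp : IsStrictlyHStable p) (hx : ∀ i, 0 ≤ x i) (hpos : ∃ i, 0 < x i) :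
    ∀ r ∈ (slice p x).roots, r < 0 := by
  intro r hr
  by_contra! hr_nonneg
  refine hp.slice_eval_ne_zero (z := algebraMap ℝ ℂ ∘ x) (w := r) hx hpos hr_nonneg ?_
  rw [← map_slice]
  exact ((Polynomial.mem_roots'.1 hr).2.map (f := algebraMap ℝ ℂ))

end IsStrictlyHStable

theorem mul_pow_mul_prod_le_aeval_coeff_one {n : ℕ} {p : MvPolynomial (Fin (n + 1)) ℝ}
    (hp : IsStrictlyHStable p) (hhom : p.IsHomogeneous (n + 1)) {C : ℝ} (hC : 0 < C)
    (hcap : ∀ x : Fin (n + 1) → ℝ, (∀ i, 0 < x i) → C * ∏ i, x i ≤ aeval x p)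
    {x : Fin n → ℝ} (hx : ∀ i, 0 < x i) :
    C * (n / (n + 1)) ^ n * ∏ i, x i ≤ aeval x ((finSuccEquiv ℝ n p).coeff 1) := by
  have hslice {t : ℝ} (ht : 0 < t) : C * (∏ i, x i) * t ≤ (slice p x).eval t := by
    have := hcap (Fin.cons t x) (Fin.cases ht hx)
    rw [Fin.prod_cons] at this
    rw [eval_slice]
    linarith
  rw [← coeff_slice, mul_right_comm]
  rcases Nat.eq_zero_or_pos n with rfl | hn
  · have := hslice one_pos
    rw [eval_slice] at this
    rw [coeff_slice_of_isHomogeneous hhom]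
    simpa [Subsingleton.elim x 0] using this
  · have hpos : ∃ i, 0 < x i := ⟨⟨0, hn⟩, hx _⟩
    have hx' (i : Fin n) : 0 ≤ x i := (hx i).le
    have hlead : aeval (Fin.cons 1 0 : Fin (n + 1) → ℝ) p ≠ 0 :=
      hp.aeval_ne_zero (Fin.cases zero_le_one fun _ => le_rfl) ⟨0, zero_lt_one⟩
    have hprod : 0 < C * ∏ i, x i := mul_pos hC (Finset.prod_pos fun i _ => hx i)
    exact mul_pow_le_coeff_one (hp.slice_splits hhom hx' hpos) (hp.slice_roots_neg hx' hpos)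
      hn.ne' (natDegree_slice hhom hlead x) hprod fun t ht => hslice ht

theorem factorial_succ_div_pow (n : ℕ) :
    (((n + 1).factorial : ℝ) / ((n + 1 : ℕ) : ℝ) ^ (n + 1)) =
      (n / (n + 1)) ^ n * (n.factorial / n ^ n) := by
  rcases eq_or_ne n 0 with rfl | hn
  · simp
  · rw [Nat.factorial_succ, div_pow, pow_succ]
    push_cast
    field_simp

theorem gurvits_capacity_inequality {n : ℕ} {p : MvPolynomial (Fin n) ℝ}
    (hp : IsStrictlyHStable p) (hhom : p.IsHomogeneous n) {C : ℝ} (hC : 0 < C)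
    (hcap : ∀ x : Fin n → ℝ, (∀ i, 0 < x i) → C * ∏ i, x i ≤ aeval x p) :
    C * (n.factorial / n ^ n) ≤ p.coeff (Finsupp.equivFunOnFinite.symm 1) := by
  induction n generalizing C with
  | zero =>
    obtain ⟨a, rfl⟩ := C_surjective (R := ℝ) (Fin 0) p
    simpa [Subsingleton.elim (Finsupp.equivFunOnFinite.symm (1 : Fin 0 → ℕ)) 0] using
      hcap 0 fun i => i.elim0
  | succ n ih =>
    have hpow_pos : (0 : ℝ) < (n / (n + 1)) ^ n := by
      rcases Nat.eq_zero_or_pos n with rfl | hn <;> positivity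
    have hq := ih (hp.coeff_one_finSuccEquiv hhom n.succ_ne_zero)
      (hhom.finSuccEquiv_coeff_isHomogeneous 1 n (add_comm 1 n))
      (mul_pos hC hpow_pos)
      fun x hx => mul_pow_mul_prod_le_aeval_coeff_one hp hhom hC hcap hx
    rw [finSuccEquiv_coeff_coeff] at hq
    have hcons : Finsupp.cons 1 (Finsupp.equivFunOnFinite.symm (1 : Fin n → ℕ)) =
        Finsupp.equivFunOnFinite.symm (1 : Fin (n + 1) → ℕ) := by
      ext i
      refine Fin.cases ?_ (fun j => ?_) i <;> simp
    rwa [hcons, mul_assoc, ← factorial_succ_div_pow] at hq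

end Stable

section RowFormProd

open MvPolynomial

variable {ι κ R : Type*} [Fintype ι] [Fintype κ] [CommSemiring R]

/-- The product over the rows of `A` of the linear forms whose coefficients are the entries of the
row. -/
def rowFormProd (A : Matrix ι κ R) : MvPolynomial κ R :=
  ∏ i, ∑ j, C (A i j) * X j

theorem isHomogeneous_rowFormProd (A : Matrix ι κ R) :
    (rowFormProd A).IsHomogeneous (Fintype.card ι) := by
  simpa only [rowFormProd, Finset.sum_const, Finset.card_univ, smul_eq_mul, mul_one] using
    IsHomogeneous.prod Finset.univ (fun i => ∑ j, C (A i j) * X j) (fun _ => 1)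
      fun i _ => IsHomogeneous.sum _ _ _ fun j _ => isHomogeneous_C_mul_X (A i j) j

theorem aeval_rowFormProd {S : Type*} [CommSemiring S] [Algebra R S] (A : Matrix ι κ R)
    (x : κ → S) : aeval x (rowFormProd A) = ∏ i, ∑ j, algebraMap R S (A i j) * x j := by
  simp [rowFormProd]

theorem isStrictlyHStable_rowFormProd {A : Matrix ι κ ℝ} (hA : ∀ i j, 0 < A i j) :
    IsStrictlyHStable (rowFormProd A) := by
  rintro z hz ⟨k, hk⟩
  rw [aeval_rowFormProd, Finset.prod_ne_zero_iff]
  intro i _ hzero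
  have hpos : 0 < ∑ j, A i j * (z j).re :=
    Finset.sum_pos' (fun j _ => mul_nonneg (hA i j).le (hz j))
      ⟨k, Finset.mem_univ k, mul_pos (hA i k) hk⟩
  refine hpos.ne' ?_
  simpa using congrArg Complex.re hzero

theorem bijective_iff_card_fiber_eq_one {κ : Type*} [DecidableEq κ] {f : ι → κ} :
    Function.Bijective f ↔ ∀ j, Finset.card {i | f i = j} = 1 := by
  simp only [Function.bijective_iff_existsUnique, Finset.card_eq_one,
    Finset.singleton_iff_unique_mem, Finset.mem_filter_univ]

theorem sum_single_eq_one_iff_bijective {κ : Type*} [Finite κ] {f : ι → κ} :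
    ∑ i, Finsupp.single (f i) 1 = Finsupp.equivFunOnFinite.symm (1 : κ → ℕ) ↔
      Function.Bijective f := by
  classical
  rw [bijective_iff_card_fiber_eq_one, DFunLike.ext_iff]
  refine forall_congr' fun j => ?_
  simp only [Finsupp.finsetSum_apply, Finsupp.single_apply, Finset.card_filter,
    Finsupp.coe_equivFunOnFinite_symm, Pi.one_apply]

variable [DecidableEq ι]

theorem permanent_eq_sum_bijective (A : Matrix ι ι R) :
    A.permanent = ∑ f : ι → ι with Function.Bijective f, ∏ i, A i (f i) := by
  rw [← Matrix.permanent_transpose]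
  refine Finset.sum_bij (fun σ _ => ⇑σ) (fun σ _ => Finset.mem_filter_univ _ |>.2 σ.bijective)
    (fun σ _ τ _ h => DFunLike.coe_injective h) (fun f hf => ?_) fun _ _ => rfl
  exact ⟨Equiv.ofBijective f (Finset.mem_filter.1 hf).2, Finset.mem_univ _, rfl⟩

theorem coeff_one_rowFormProd (A : Matrix ι ι R) :
    (rowFormProd A).coeff (Finsupp.equivFunOnFinite.symm 1) = A.permanent := by
  classical
  have hterm (f : ι → ι) : ∏ i, C (A i (f i)) * X (f i) =
      monomial (∑ i, Finsupp.single (f i) 1) (∏ i, A i (f i)) := by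
    rw [monomial_sum_index, Finset.prod_mul_distrib, map_prod]
    rfl
  rw [rowFormProd, Fintype.prod_sum, coeff_sum, permanent_eq_sum_bijective, Finset.sum_filter]
  simp only [hterm, coeff_monomial, sum_single_eq_one_iff_bijective]

theorem prod_le_aeval_rowFormProd {A : Matrix ι ι ℝ} (hA : A ∈ doublyStochastic ℝ ι)
    {x : ι → ℝ} (hx : ∀ j, 0 ≤ x j) : ∏ j, x j ≤ aeval x (rowFormProd A) := by
  obtain ⟨hnonneg, hrow, hcol⟩ := mem_doublyStochastic_iff_sum.1 hA
  calc ∏ j, x j = ∏ i, ∏ j, x j ^ A i j := by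
        rw [Finset.prod_comm]
        refine Finset.prod_congr rfl fun j _ => ?_
        rw [← Real.rpow_sum_of_nonneg (hx j) fun i _ => hnonneg i j, hcol, Real.rpow_one]
    _ ≤ ∏ i, ∑ j, A i j * x j := Finset.prod_le_prod
        (fun i _ => Finset.prod_nonneg fun j _ => Real.rpow_nonneg (hx j) _)
        fun i _ => Real.geom_mean_le_arith_mean_weighted _ _ _ (fun j _ => hnonneg i j) (hrow i)
          fun j _ => hx j
    _ = aeval x (rowFormProd A) := by simp only [aeval_rowFormProd, Algebra.algebraMap_self_apply]

end RowFormProd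

section VanDerWaerden

open MvPolynomial

variable {ι : Type*} [Fintype ι] [DecidableEq ι]

theorem permanent_reindex {κ R : Type*} [Fintype κ] [DecidableEq κ] [CommSemiring R] (e : ι ≃ κ)
    (A : Matrix ι ι R) : (Matrix.reindex e e A).permanent = A.permanent := by
  refine Fintype.sum_equiv e.symm.permCongr _ _ fun σ => ?_
  exact (Fintype.prod_equiv e _ _ fun i => by simp).symm

theorem factorial_div_pow_le_permanent_of_pos {A : Matrix ι ι ℝ} (hA : A ∈ doublyStochastic ℝ ι)
    (hpos : ∀ i j, 0 < A i j) :
    ((Fintype.card ι).factorial : ℝ) / (Fintype.card ι : ℝ) ^ Fintype.card ι ≤ A.permanent := by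
  have hfin {n : ℕ} {B : Matrix (Fin n) (Fin n) ℝ} (hB : B ∈ doublyStochastic ℝ (Fin n))
      (hBpos : ∀ i j, 0 < B i j) : (n.factorial : ℝ) / (n : ℝ) ^ n ≤ B.permanent := by
    have hhom := isHomogeneous_rowFormProd B
    rw [Fintype.card_fin] at hhom
    have hcap (x : Fin n → ℝ) (hx : ∀ j, 0 < x j) :
        1 * ∏ j, x j ≤ aeval x (rowFormProd B) := by
      rw [one_mul]
      exact prod_le_aeval_rowFormProd hB fun j => (hx j).le
    simpa only [one_mul, coeff_one_rowFormProd] using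
      gurvits_capacity_inequality (isStrictlyHStable_rowFormProd hBpos) hhom one_pos hcap
  rw [← permanent_reindex (Fintype.equivFin ι)]
  exact hfin (reindex_mem_doublyStochastic hA) fun _ _ => hpos _ _

theorem factorial_div_pow_le_permanent {A : Matrix ι ι ℝ} (hA : A ∈ doublyStochastic ℝ ι) :
    ((Fintype.card ι).factorial : ℝ) / (Fintype.card ι : ℝ) ^ Fintype.card ι ≤ A.permanent := by
  rcases isEmpty_or_nonempty ι with _ | _
  · simp [Matrix.permanent_isEmpty]
  set J : Matrix ι ι ℝ := Matrix.of fun _ _ => (Fintype.card ι : ℝ)⁻¹ with hJ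
  have hJ_mem : J ∈ doublyStochastic ℝ ι := by
    simp [mem_doublyStochastic_iff_sum, hJ]
  have hbound : ∀ t ∈ Set.Ioo (0 : ℝ) 1,
      ((Fintype.card ι).factorial : ℝ) / (Fintype.card ι : ℝ) ^ Fintype.card ι ≤
        ((1 - t) • A + t • J).permanent := fun t ht => by
    refine factorial_div_pow_le_permanent_of_pos (convex_doublyStochastic hA hJ_mem
      (sub_nonneg.2 ht.2.le) ht.1.le (sub_add_cancel 1 t)) fun i j => ?_
    have hJ_pos : 0 < t * J i j := mul_pos ht.1 (by simp [hJ, Fintype.card_pos])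
    exact add_pos_of_nonneg_of_pos
      (mul_nonneg (sub_nonneg.2 ht.2.le) (nonneg_of_mem_doublyStochastic hA)) hJ_pos
  have hcont : Continuous fun t : ℝ => ((1 - t) • A + t • J).permanent := by
    simp only [Matrix.permanent, Matrix.add_apply, Matrix.smul_apply]
    fun_prop
  have hlim : Filter.Tendsto (fun t : ℝ => ((1 - t) • A + t • J).permanent)
      (nhdsWithin 0 (Set.Ioi 0)) (nhds A.permanent) := by
    simpa using (hcont.tendsto 0).mono_left nhdsWithin_le_nhds
  exact ge_of_tendsto hlim (Filter.mem_of_superset (Ioo_mem_nhdsGT one_pos) hbound)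

end VanDerWaerden

section Balanced

variable {ι κ R : Type*} [Fintype ι] [DecidableEq ι] [Fintype κ]

/-- The matrix whose `(i, j)` entry counts the members of the family `f` that send `i` to `j`. -/
def countMatrix {ι : Type*} [DecidableEq ι] (f : κ → ι → ι) : Matrix ι ι ℕ :=
  Matrix.of fun i j => Finset.card {k | f k i = j}

/-- A family of self-maps of `ι` is balanced if it takes every value as often in total as a family
of permutations would, namely once per member. -/
def IsBalanced (f : κ → ι → ι) : Prop :=
  ∀ j, ∑ i, countMatrix f i j = Fintype.card κ

instance (f : κ → ι → ι) : Decidable (IsBalanced f) :=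
  inferInstanceAs (Decidable (∀ _, _))

theorem sum_countMatrix_row (f : κ → ι → ι) (i : ι) :
    ∑ j, countMatrix f i j = Fintype.card κ :=
  (Finset.card_eq_sum_card_fiberwise fun _ _ => Finset.mem_coe.2 (Finset.mem_univ _)).symm

theorem sum_countMatrix_col (f : κ → ι → ι) (j : ι) :
    ∑ i, countMatrix f i j = Fintype.card {p : ι × κ // f p.2 p.1 = j} := by
  simp only [countMatrix, Matrix.of_apply, Fintype.card_subtype, Finset.card_filter,
    Fintype.sum_prod_type]

theorem countMatrix_reindex {ι : Type*} [DecidableEq ι] (e : ι → Equiv.Perm κ) (f : κ → ι → ι) :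
    countMatrix (fun k i => f (e i k) i) = countMatrix f := by
  ext i j
  exact Finset.card_equiv (e i) fun k => by simp

theorem isBalanced_reindex_iff {e : ι → Equiv.Perm κ} {f : κ → ι → ι} :
    IsBalanced (fun k i => f (e i k) i) ↔ IsBalanced f := by
  rw [IsBalanced, countMatrix_reindex, IsBalanced]

theorem isBalanced_cons_iff {M : ℕ} {h : ι → ι} (hh : Function.Bijective h)
    {f : Fin M → ι → ι} :
    IsBalanced (Fin.cons h f : Fin (M + 1) → ι → ι) ↔ IsBalanced f := by
  refine forall_congr' fun j => ?_
  have hcol := bijective_iff_card_fiber_eq_one.1 hh j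
  rw [Finset.card_filter] at hcol
  simp only [countMatrix, Matrix.of_apply, Finset.card_filter, Fin.sum_univ_succ, Fin.cons_zero,
    Fin.cons_succ, Finset.sum_add_distrib, hcol, Fintype.card_fin]
  omega

theorem IsBalanced.bijective_default [Unique κ] {f : κ → ι → ι} (hf : IsBalanced f) :
    Function.Bijective (f default) := by
  refine bijective_iff_card_fiber_eq_one.2 fun j => ?_
  simpa only [countMatrix, Matrix.of_apply, Finset.card_filter, Fintype.sum_unique,
    Fintype.card_unique] using hf j

theorem card_bijective_transversal (f : κ → ι → ι) :
    Finset.card {s : ι → κ | Function.Bijective fun i => f (s i) i} =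
      (countMatrix f).permanent := by
  have hmaps : Set.MapsTo (fun (s : ι → κ) i => f (s i) i)
      (({s | Function.Bijective fun i => f (s i) i} : Finset (ι → κ)) : Set (ι → κ))
      (({g | Function.Bijective g} : Finset (ι → ι)) : Set (ι → ι)) := fun s hs => by
    simpa using hs
  rw [permanent_eq_sum_bijective, Finset.card_eq_sum_card_fiberwise hmaps]
  refine Finset.sum_congr rfl fun g hg => ?_
  simp only [countMatrix, Matrix.of_apply]
  rw [← Fintype.card_piFinset]
  congr 1
  ext s
  simp only [Finset.mem_filter, Finset.mem_univ, true_and, Fintype.mem_piFinset, ← funext_iff]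
  refine and_iff_right_of_imp ?_
  rintro rfl
  exact (Finset.mem_filter_univ _).1 hg

theorem IsBalanced.factorial_div_pow_le_permanent_countMatrix [Nonempty κ] {f : κ → ι → ι}
    (hf : IsBalanced f) :
    (Fintype.card κ : ℝ) ^ Fintype.card ι *
        ((Fintype.card ι).factorial / (Fintype.card ι : ℝ) ^ Fintype.card ι) ≤
      (countMatrix f).permanent := by
  set c : ℝ := (Fintype.card κ : ℝ) with hc
  have hc_pos : 0 < c := Nat.cast_pos.2 Fintype.card_pos
  set A : Matrix ι ι ℝ := (countMatrix f).map Nat.cast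
  have hA : c⁻¹ • A ∈ doublyStochastic ℝ ι := by
    refine mem_doublyStochastic_iff_sum.2 ⟨fun i j =>
      mul_nonneg (inv_nonneg.2 hc_pos.le) (Nat.cast_nonneg _), fun i => ?_, fun j => ?_⟩
    · rw [← inv_mul_cancel₀ hc_pos.ne', hc, ← sum_countMatrix_row f i]
      simp [A, Finset.mul_sum]
    · rw [← inv_mul_cancel₀ hc_pos.ne', hc, ← hf j]
      simp [A, Finset.mul_sum]
  have hcast : A.permanent = (countMatrix f).permanent := by
    simp only [A, Matrix.permanent, Matrix.map_apply, Nat.cast_sum, Nat.cast_prod]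
  have hvdw := factorial_div_pow_le_permanent hA
  rwa [Matrix.permanent_smul, hcast, inv_pow, ← div_eq_inv_mul,
    le_div_iff₀' (pow_pos hc_pos _)] at hvdw

section Sums

variable [DecidableEq κ] [CommSemiring R]

/-- The sum of the weights `∏ k, ∏ i, θ i (f k i)` of the balanced families `f` indexed by `κ`. -/
def balancedSum (θ : Matrix ι ι R) (κ : Type*) [Fintype κ] [DecidableEq κ] : R :=
  ∑ f : κ → ι → ι with IsBalanced f, ∏ k, ∏ i, θ i (f k i)

/-- The sum of the weights of the balanced families `f` for which the transversal
`i ↦ f (s i) i` selected by `s` is a permutation. -/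
def transversalSum (θ : Matrix ι ι R) (s : ι → κ) : R :=
  ∑ f : κ → ι → ι with IsBalanced f ∧ Function.Bijective fun i => f (s i) i,
    ∏ k, ∏ i, θ i (f k i)

theorem transversalSum_reindex (θ : Matrix ι ι R) (e : ι → Equiv.Perm κ) (s : ι → κ) :
    transversalSum θ (fun i => e i (s i)) = transversalSum θ s := by
  refine Finset.sum_nbij' (fun f k i => f (e i k) i) (fun f k i => f ((e i).symm k) i)
    (fun f hf => ?_) (fun f hf => ?_) (fun f _ => by simp) (fun f _ => by simp) fun f _ => ?_
  · simpa only [Finset.mem_filter_univ, isBalanced_reindex_iff] using hf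
  · simpa only [Finset.mem_filter_univ, isBalanced_reindex_iff (e := fun i => (e i).symm),
      Equiv.symm_apply_apply] using hf
  · rw [Finset.prod_comm, Finset.prod_comm (f := fun k i => θ i (f (e i k) i))]
    exact Finset.prod_congr rfl fun i _ => (Equiv.prod_comp (e i) fun k => θ i (f k i)).symm

theorem transversalSum_zero (θ : Matrix ι ι R) (M : ℕ) :
    transversalSum θ (fun _ => (0 : Fin (M + 1))) = θ.permanent * balancedSum θ (Fin M) := by
  rw [permanent_eq_sum_bijective, balancedSum, Finset.sum_mul_sum, ← Finset.sum_product']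
  refine Finset.sum_nbij' (fun f => (f 0, Fin.tail f)) (fun p => Fin.cons p.1 p.2)
    (fun f hf => ?_) (fun p hp => ?_) (fun f _ => Fin.cons_self_tail f) (fun p _ => rfl)
    fun f _ => Fin.prod_univ_succ _
  · obtain ⟨hbal, hbij⟩ := (Finset.mem_filter_univ _).1 hf
    rw [← Fin.cons_self_tail f, isBalanced_cons_iff hbij] at hbal
    exact Finset.mk_mem_product ((Finset.mem_filter_univ _).2 hbij)
      ((Finset.mem_filter_univ _).2 hbal)
  · obtain ⟨hbij, hbal⟩ := Finset.mem_product.1 hp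
    rw [Finset.mem_filter_univ] at hbij hbal
    exact (Finset.mem_filter_univ _).2 ⟨(isBalanced_cons_iff hbij).2 hbal, hbij⟩

theorem transversalSum_eq (θ : Matrix ι ι R) {M : ℕ} (s : ι → Fin (M + 1)) :
    transversalSum θ s = θ.permanent * balancedSum θ (Fin M) := by
  rw [← transversalSum_zero, ← transversalSum_reindex θ (fun i => Equiv.swap 0 (s i)) s]
  simp only [Equiv.swap_apply_right]

theorem sum_transversalSum (θ : Matrix ι ι R) :
    ∑ s : ι → κ, transversalSum θ s =
      ∑ f : κ → ι → ι with IsBalanced f,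
        (countMatrix f).permanent * ∏ k, ∏ i, θ i (f k i) := by
  simp only [transversalSum]
  rw [Finset.sum_comm' (t' := {f | IsBalanced f})
    (s' := fun f => {s | Function.Bijective fun i => f (s i) i})
    fun s f => by simp only [Finset.mem_filter, Finset.mem_univ, true_and, and_comm]]
  simp only [Finset.sum_const, card_bijective_transversal, nsmul_eq_mul]

theorem balancedSum_of_isEmpty [IsEmpty κ] (θ : Matrix ι ι R) : balancedSum θ κ = 1 := by
  simp [balancedSum, IsBalanced, countMatrix]

theorem balancedSum_fin_one (θ : Matrix ι ι R) : balancedSum θ (Fin 1) = θ.permanent := by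
  rw [← mul_one θ.permanent, ← balancedSum_of_isEmpty (κ := Fin 0) θ, ← transversalSum_zero,
    transversalSum, balancedSum]
  congr! 3 with f
  exact (and_iff_left_of_imp IsBalanced.bijective_default).symm

end Sums

theorem permanent_nonneg [CommSemiring R] [PartialOrder R] [IsOrderedRing R] {θ : Matrix ι ι R}
    (hθ : ∀ i j, 0 ≤ θ i j) : 0 ≤ θ.permanent :=
  Finset.sum_nonneg fun _ _ => Finset.prod_nonneg fun _ _ => hθ _ _

theorem permanent_pos [CommSemiring R] [PartialOrder R] [IsStrictOrderedRing R] {θ : Matrix ι ι R}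
    (hθ : ∀ i j, 0 ≤ θ i j)
    (hex : ∃ σ : Equiv.Perm ι, 0 < ∏ i, θ i (σ i)) : 0 < θ.permanent := by
  obtain ⟨σ, hσ⟩ := hex
  rw [← Matrix.permanent_transpose]
  exact Finset.sum_pos' (fun τ _ => Finset.prod_nonneg fun i _ => hθ i (τ i))
    ⟨σ, Finset.mem_univ σ, hσ⟩

theorem permanent_mul_balancedSum_le [CommSemiring R] [PartialOrder R] [IsOrderedRing R]
    {θ : Matrix ι ι R} (hθ : ∀ i j, 0 ≤ θ i j) (M : ℕ) :
    θ.permanent * balancedSum θ (Fin M) ≤ balancedSum θ (Fin (M + 1)) := by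
  rw [← transversalSum_zero]
  exact Finset.sum_le_sum_of_subset_of_nonneg
    (Finset.monotone_filter_right _ fun _ _ h => h.1)
    fun _ _ _ => Finset.prod_nonneg fun _ _ => Finset.prod_nonneg fun _ _ => hθ _ _

theorem permanent_pow_le_balancedSum [CommSemiring R] [PartialOrder R] [IsOrderedRing R]
    {θ : Matrix ι ι R} (hθ : ∀ i j, 0 ≤ θ i j) (M : ℕ) :
    θ.permanent ^ M ≤ balancedSum θ (Fin M) := by
  induction M with
  | zero => rw [pow_zero, balancedSum_of_isEmpty]
  | succ M ih =>
    rw [pow_succ']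
    exact (mul_le_mul_of_nonneg_left ih (permanent_nonneg hθ)).trans
      (permanent_mul_balancedSum_le hθ M)

theorem factorial_div_pow_mul_balancedSum_le {θ : Matrix ι ι ℝ} (hθ : ∀ i j, 0 ≤ θ i j) (M : ℕ) :
    (Fintype.card ι).factorial / (Fintype.card ι : ℝ) ^ Fintype.card ι *
        balancedSum θ (Fin (M + 1)) ≤
      θ.permanent * balancedSum θ (Fin M) := by
  set n := Fintype.card ι
  have hsum : ∑ s : ι → Fin (M + 1), transversalSum θ s =
      ((M + 1 : ℕ) : ℝ) ^ n * (θ.permanent * balancedSum θ (Fin M)) := by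
    simp [transversalSum_eq, n]
  refine le_of_mul_le_mul_left ?_ (pow_pos (Nat.cast_pos.2 M.succ_pos) n)
  rw [← hsum, sum_transversalSum, balancedSum, ← mul_assoc, Finset.mul_sum]
  refine Finset.sum_le_sum fun f hf => mul_le_mul_of_nonneg_right ?_
    (Finset.prod_nonneg fun _ _ => Finset.prod_nonneg fun _ _ => hθ _ _)
  simpa only [Fintype.card_fin] using
    ((Finset.mem_filter_univ f).1 hf).factorial_div_pow_le_permanent_countMatrix

theorem factorial_div_pow_pow_mul_balancedSum_le {θ : Matrix ι ι ℝ} (hθ : ∀ i j, 0 ≤ θ i j)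
    (M : ℕ) :
    ((Fintype.card ι).factorial / (Fintype.card ι : ℝ) ^ Fintype.card ι) ^ M *
        balancedSum θ (Fin (M + 1)) ≤ θ.permanent ^ (M + 1) := by
  set c : ℝ := (Fintype.card ι).factorial / (Fintype.card ι : ℝ) ^ Fintype.card ι
  induction M with
  | zero => rw [pow_zero, one_mul, zero_add, balancedSum_fin_one, pow_one]
  | succ M ih =>
    calc c ^ (M + 1) * balancedSum θ (Fin (M + 1 + 1))
        = c ^ M * (c * balancedSum θ (Fin (M + 1 + 1))) := by ring
      _ ≤ c ^ M * (θ.permanent * balancedSum θ (Fin (M + 1))) :=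
        mul_le_mul_of_nonneg_left (factorial_div_pow_mul_balancedSum_le hθ _) (by positivity)
      _ = θ.permanent * (c ^ M * balancedSum θ (Fin (M + 1))) := by ring
      _ ≤ θ.permanent * θ.permanent ^ (M + 1) :=
        mul_le_mul_of_nonneg_left ih (permanent_nonneg hθ)
      _ = θ.permanent ^ (M + 1 + 1) := (pow_succ' _ _).symm

end Balanced

section Kronecker

variable {ι κ R : Type*} [Fintype ι] [DecidableEq ι] [Fintype κ]

theorem card_perm_comp_eq {α γ : Type*} [Fintype α] [DecidableEq α] [Fintype γ] [DecidableEq γ]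
    {F g : α → γ}
    (h : ∀ c, Fintype.card {a // g a = c} = Fintype.card {a // F a = c}) :
    Fintype.card {τ : Equiv.Perm α // F ∘ τ = g} =
      ∏ c, (Fintype.card {a // F a = c}).factorial := by
  rw [← DomMulAct.stabilizer_card F]
  set τ₀ : Equiv.Perm α := Equiv.ofFiberEquiv fun c => Fintype.equivOfCardEq (h c)
  have hτ₀ : F ∘ τ₀ = g := funext fun a => Equiv.ofFiberEquiv_map _ a
  refine (Fintype.card_congr ((Equiv.mulRight τ₀).subtypeEquiv fun ρ => ?_)).symm
  rw [Equiv.coe_mulRight, Equiv.Perm.coe_mul, ← Function.comp_assoc, ← hτ₀]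
  exact (Equiv.surjective τ₀).injective_comp_right.eq_iff.symm

theorem card_fst_fiber (j : ι) : Fintype.card {p : ι × κ // p.1 = j} = Fintype.card κ := by
  rw [Fintype.card_subtype, Finset.card_filter, Fintype.sum_prod_type_right]
  simp only [Finset.sum_ite_eq', Finset.mem_univ, if_true, Finset.sum_const, Finset.card_univ,
    smul_eq_mul, mul_one]

variable [DecidableEq κ]

theorem card_perm_fst_comp_eq (f : κ → ι → ι) :
    Fintype.card {τ : Equiv.Perm (ι × κ) // Prod.fst ∘ τ = fun p => f p.2 p.1} =
      if IsBalanced f then (Fintype.card κ).factorial ^ Fintype.card ι else 0 := by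
  split_ifs with hf
  · rw [card_perm_comp_eq fun j => by rw [← sum_countMatrix_col, hf j, card_fst_fiber]]
    simp only [card_fst_fiber, Finset.prod_const, Finset.card_univ]
  · rw [Fintype.card_eq_zero_iff, isEmpty_subtype]
    intro τ hτ
    refine hf fun j => ?_
    rw [sum_countMatrix_col, ← card_fst_fiber (κ := κ) j]
    exact Fintype.card_congr (τ.subtypeEquiv fun p => by rw [← congrFun hτ p, Function.comp_apply])

theorem sum_perm_prod_fst [CommSemiring R] (θ : Matrix ι ι R) :
    ∑ τ : Equiv.Perm (ι × κ), ∏ p : ι × κ, θ p.1 (τ p).1 =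
      (Fintype.card κ).factorial ^ Fintype.card ι * balancedSum θ κ := by
  let e : (κ → ι → ι) ≃ (ι × κ → ι) :=
    (Equiv.piComm fun _ _ => ι).trans (Equiv.curry ι κ ι).symm
  have hweight (f : κ → ι → ι) {τ : Equiv.Perm (ι × κ)} (hτ : Prod.fst ∘ τ = e f) :
      ∏ p : ι × κ, θ p.1 (τ p).1 = ∏ k, ∏ i, θ i (f k i) := by
    rw [← Fintype.prod_prod_type_right (f := fun p : ι × κ => θ p.1 (f p.2 p.1))]
    exact Finset.prod_congr rfl fun p _ => congrArg (θ p.1) (congrFun hτ p)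
  have hcard (f : κ → ι → ι) :
      Finset.card {τ : Equiv.Perm (ι × κ) | Prod.fst ∘ τ = e f} =
        if IsBalanced f then (Fintype.card κ).factorial ^ Fintype.card ι else 0 := by
    rw [← Fintype.card_subtype]
    exact card_perm_fst_comp_eq f
  rw [← Finset.sum_fiberwise _ fun τ : Equiv.Perm (ι × κ) => (Prod.fst ∘ τ : ι × κ → ι),
    ← e.sum_comp, balancedSum, Finset.mul_sum, Finset.sum_filter]
  refine Finset.sum_congr rfl fun f _ => ?_
  rw [Finset.sum_congr rfl fun τ hτ => hweight f (Finset.mem_filter.1 hτ).2, Finset.sum_const,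
    hcard, nsmul_eq_mul]
  split_ifs <;> simp

theorem permanent_kronecker_const [CommSemiring R] (θ : Matrix ι ι R) (u : R) :
    (Matrix.kroneckerMap (· * ·) θ (Matrix.of fun _ _ : κ => u)).permanent =
      u ^ (Fintype.card ι * Fintype.card κ) *
        ((Fintype.card κ).factorial ^ Fintype.card ι * balancedSum θ κ) := by
  rw [← Matrix.permanent_transpose, ← sum_perm_prod_fst, Matrix.permanent, Finset.mul_sum]
  refine Finset.sum_congr rfl fun τ _ => ?_
  simp only [Matrix.transpose_apply, Matrix.kroneckerMap_apply, Matrix.of_apply,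
    Finset.prod_mul_distrib, Finset.prod_const, Finset.card_univ, Fintype.card_prod, mul_comm]

theorem pow_div_factorial_pow_mul_permanent_kronecker [Nonempty κ] (θ : Matrix ι ι ℝ) :
    ((Fintype.card κ : ℝ) ^ Fintype.card κ / (Fintype.card κ).factorial) ^ Fintype.card ι *
        (Matrix.kroneckerMap (· * ·) θ
          (Matrix.of fun _ _ : κ => 1 / (Fintype.card κ : ℝ))).permanent =
      balancedSum θ κ := by
  rw [permanent_kronecker_const, div_pow, one_div, inv_pow, ← pow_mul,
    mul_comm (Fintype.card κ) (Fintype.card ι)]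
  field_simp

end Kronecker

theorem root_bounds_of_pow_bounds {n M : ℕ} (hM : 1 ≤ M) {c p q : ℝ} (hc : 0 ≤ c) (hp : 0 ≤ p)
    (hq : 0 < q)
    (hlower : ((M : ℝ) ^ M / (M.factorial : ℝ)) ^ n * c ^ (M - 1) * q ≤ p ^ M)
    (hupper : p ^ M ≤ ((M : ℝ) ^ M / (M.factorial : ℝ)) ^ n * q) :
    (M : ℝ) ^ n / (M.factorial : ℝ) ^ ((n : ℝ) / (M : ℝ)) * c ^ (((M : ℝ) - 1) / (M : ℝ)) ≤
        p / q ^ (1 / (M : ℝ)) ∧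
      p / q ^ (1 / (M : ℝ)) ≤ (M : ℝ) ^ n / (M.factorial : ℝ) ^ ((n : ℝ) / (M : ℝ)) := by
  have hM₀ : (M : ℝ) ≠ 0 := Nat.cast_ne_zero.2 (Nat.one_le_iff_ne_zero.1 hM)
  have hfactor : ((M : ℝ) ^ n / (M.factorial : ℝ) ^ ((n : ℝ) / (M : ℝ))) ^ M =
      ((M : ℝ) ^ M / (M.factorial : ℝ)) ^ n := by
    rw [div_pow, div_pow, ← pow_mul, ← pow_mul, mul_comm n M,
      ← Real.rpow_mul_natCast (Nat.cast_nonneg _), div_mul_cancel₀ _ hM₀, Real.rpow_natCast]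
  have hc_root : (c ^ (((M : ℝ) - 1) / (M : ℝ))) ^ M = c ^ (M - 1) := by
    rw [← Real.rpow_mul_natCast hc, div_mul_cancel₀ _ hM₀, ← Real.rpow_natCast,
      Nat.cast_sub hM, Nat.cast_one]
  have hq_root : (q ^ (1 / (M : ℝ))) ^ M = q := by
    rw [← Real.rpow_mul_natCast hq.le, one_div_mul_cancel hM₀, Real.rpow_one]
  have hq_root_pos : 0 < q ^ (1 / (M : ℝ)) := Real.rpow_pos_of_pos hq _
  rw [le_div_iff₀ hq_root_pos, div_le_iff₀ hq_root_pos]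
  constructor
  · refine le_of_pow_le_pow_left₀ (Nat.one_le_iff_ne_zero.1 hM) hp ?_
    rwa [mul_pow, mul_pow, hfactor, hc_root, hq_root]
  · refine le_of_pow_le_pow_left₀ (Nat.one_le_iff_ne_zero.1 hM) (by positivity) ?_
    rwa [mul_pow, hfactor, hq_root]

theorem perm'_eq_permanent {α : Type*} [Fintype α] [DecidableEq α] (A : Matrix α α ℝ) :
    perm' A = A.permanent :=
  A.permanent_transpose

/-- For `n, M ≥ 1` and a nonnegative `n×n` matrix `θ` with
`∏_i θ(i,σ(i)) > 0` for at least one permutation `σ`: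
`(M^M/M!)^n · (n!/n^n)^{M−1} · perm(θ ⊗ U_{M,M}) ≤ perm(θ)^M ≤ (M^M/M!)^n · perm(θ ⊗ U_{M,M})`;
equivalently, the degree-`M` scaled Sinkhorn permanent
`perm_{scS,M}(θ) = perm(θ ⊗ U_{M,M})^{1/M}` satisfies
`(M^n/(M!)^{n/M})·(n!/n^n)^{(M−1)/M} ≤ perm(θ)/perm_{scS,M}(θ) ≤ M^n/(M!)^{n/M}`. -/
theorem statement_6 (n M : ℕ) (hn : 1 ≤ n) (hM : 1 ≤ M)
    (θ : Matrix (Fin n) (Fin n) ℝ) (hθ : ∀ i j, 0 ≤ θ i j)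
    (hex : ∃ σ : Equiv.Perm (Fin n), 0 < ∏ i, θ i (σ i)) :
    (((M : ℝ) ^ M / (M.factorial : ℝ)) ^ n * ((n.factorial : ℝ) / (n : ℝ) ^ n) ^ (M - 1) *
        perm' (Matrix.kroneckerMap (· * ·) θ (Matrix.of fun _ _ : Fin M => 1 / (M : ℝ))) ≤
          perm' θ ^ M ∧
      perm' θ ^ M ≤ ((M : ℝ) ^ M / (M.factorial : ℝ)) ^ n *
        perm' (Matrix.kroneckerMap (· * ·) θ (Matrix.of fun _ _ : Fin M => 1 / (M : ℝ)))) ∧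
    ((M : ℝ) ^ n / (M.factorial : ℝ) ^ ((n : ℝ) / (M : ℝ)) *
        ((n.factorial : ℝ) / (n : ℝ) ^ n) ^ (((M : ℝ) - 1) / (M : ℝ)) ≤
          perm' θ /
            (perm' (Matrix.kroneckerMap (· * ·) θ
              (Matrix.of fun _ _ : Fin M => 1 / (M : ℝ)))) ^ (1 / (M : ℝ)) ∧
      perm' θ /
          (perm' (Matrix.kroneckerMap (· * ·) θ
            (Matrix.of fun _ _ : Fin M => 1 / (M : ℝ)))) ^ (1 / (M : ℝ)) ≤
        (M : ℝ) ^ n / (M.factorial : ℝ) ^ ((n : ℝ) / (M : ℝ))) := by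
  simp only [perm'_eq_permanent]
  set c : ℝ := (n.factorial : ℝ) / (n : ℝ) ^ n
  set q := (Matrix.kroneckerMap (· * ·) θ (Matrix.of fun _ _ : Fin M => 1 / (M : ℝ))).permanent
  have hbal : ((M : ℝ) ^ M / (M.factorial : ℝ)) ^ n * q = balancedSum θ (Fin M) := by
    have : NeZero M := ⟨Nat.one_le_iff_ne_zero.1 hM⟩
    simpa only [Fintype.card_fin] using pow_div_factorial_pow_mul_permanent_kronecker (κ := Fin M) θ
  have hupper : θ.permanent ^ M ≤ ((M : ℝ) ^ M / (M.factorial : ℝ)) ^ n * q :=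
    hbal ▸ permanent_pow_le_balancedSum hθ M
  have hlower : ((M : ℝ) ^ M / (M.factorial : ℝ)) ^ n * c ^ (M - 1) * q ≤ θ.permanent ^ M := by
    have hpow := factorial_div_pow_pow_mul_balancedSum_le hθ (M - 1)
    rwa [Nat.sub_add_cancel hM, ← hbal, Fintype.card_fin, ← mul_assoc,
      mul_comm (c ^ (M - 1))] at hpow
  have hpos : 0 < θ.permanent := permanent_pos hθ hex
  have hq_pos : 0 < q :=
    pos_of_mul_pos_right ((pow_pos hpos M).trans_le hupper) (by positivity)
  exact ⟨⟨hlower, hupper⟩,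
    root_bounds_of_pow_bounds hM (by positivity) hpos.le hq_pos hlower hupper⟩
end
end
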